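/- arXiv:2005.00772 — 5 statements merged into one kernel-verified Lean document; each statement's English description precedes it below -/
import Mathlib

section
/- For all natural numbers n and λ, the alternating convolution ∑_{k=0}^{n} (−1)^k · binom(n,k) · C_{k+λ} · C_{n−k+λ} equals (λ! · χ(n even) / (n+2)_λ) · binom(2λ, λ) · binom(n, ⌊n/2⌋) · C_{λ+⌊n/2⌋}, where the identity is an equality of rational numbers (the sum vanishes when n is odd). -/
/-- Rational Pochhammer symbol: `(x)_0 = 1`, `(x)_n = x(x+1)⋯(x+n-1)`. -/
def pochQ (x : ℚ) (n : ℕ) : ℚ := ∏ i ∈ Finset.range n, (x + i)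

theorem cat_rec (m : ℕ) : ((m : ℚ) + 2) * (catalan (m + 1) : ℚ) = 2 * (2 * m + 1) * catalan m := by
  have h1 : ((m : ℚ) + 1) * catalan m = Nat.centralBinom m := by
    exact_mod_cast succ_mul_catalan_eq_centralBinom m
  have h2 : ((m : ℚ) + 1 + 1) * catalan (m + 1) = Nat.centralBinom (m + 1) := by
    exact_mod_cast succ_mul_catalan_eq_centralBinom (m + 1)
  have h3 : ((m : ℚ) + 1) * Nat.centralBinom (m + 1) = 2 * (2 * m + 1) * Nat.centralBinom m := by
    exact_mod_cast Nat.succ_mul_centralBinom_succ m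
  have hm : ((m : ℚ) + 1) ≠ 0 := by positivity
  apply mul_left_cancel₀ hm
  rw [← h1, ← h2] at h3
  linear_combination h3

def uQ (l i : ℕ) : ℚ := (catalan (i + l) : ℚ) / (i.factorial : ℚ)

theorem uQ_succ (l i : ℕ) :
    uQ l (i + 1) = 2 * (2 * i + 2 * l + 1) / (((i : ℚ) + l + 2) * (i + 1)) * uQ l i := by
  have h := cat_rec (i + l)
  unfold uQ
  rw [show i + 1 + l = i + l + 1 by ring, Nat.factorial_succ]
  have hf : (i.factorial : ℚ) ≠ 0 := by positivity
  have h1 : ((i : ℚ) + l + 2) ≠ 0 := by positivity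
  have h2 : ((i : ℚ) + 1) ≠ 0 := by positivity
  push_cast at h ⊢
  field_simp
  linear_combination h

def betQ (N l : ℚ) : ℚ := 2 * (N + 2 * l - 1) / (N * (N + l) * (N + l + 1) * (N + 2 * l + 2))
def alpQ (N l : ℚ) : ℚ := betQ N l * N - (2 * N + 2 * l - 1) / (N * (N + l + 1))
def rhoQ (N l : ℚ) : ℚ := 8 * (N + 1) * betQ N l

def AQ (l n : ℕ) : ℚ := ∑ k ∈ Finset.range (n + 1), (-1 : ℚ) ^ k * uQ l k * uQ l (n - k)

theorem key_step (l m i : ℚ) (hl : 0 ≤ l) (hm : 0 ≤ m) (hi : 0 ≤ i) :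
    2 * (2 * m + 2 * l + 1) / ((m + l + 2) * (m + 1)) *
        (2 * (2 * i + 2 * l + 1) / ((i + l + 2) * (i + 1))) + rhoQ (m + i + 2) l
      = -2 * (alpQ (m + i + 2) l - betQ (m + i + 2) l * (m + 2) * (i + 1)) *
          (2 * (2 * m + 2 * l + 1) / ((m + l + 2) * (m + 1)))
        - 2 * (alpQ (m + i + 2) l - betQ (m + i + 2) l * (m + 1) * (i + 2)) *
          (2 * (2 * i + 2 * l + 1) / ((i + l + 2) * (i + 1))) := by
  unfold rhoQ alpQ betQ
  have h1 : m + l + 2 ≠ 0 := by positivity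
  have h2 : m + 1 ≠ 0 := by positivity
  have h3 : i + l + 2 ≠ 0 := by positivity
  have h4 : i + 1 ≠ 0 := by positivity
  have h5 : m + i + 2 ≠ 0 := by positivity
  have h6 : m + i + 2 + l ≠ 0 := by positivity
  have h7 : m + i + 2 + l + 1 ≠ 0 := by positivity
  have h8 : m + i + 2 + 2 * l + 2 ≠ 0 := by positivity
  field_simp
  ring

theorem edge (l n : ℕ) :
    uQ l (n + 2) = -2 * (alpQ (n + 2) l - betQ (n + 2) l * (n + 2)) * uQ l (n + 1) := by
  rw [uQ_succ l (n + 1)]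
  unfold alpQ
  have h1 : ((n : ℚ) + 2) ≠ 0 := by positivity
  have h2 : ((n : ℚ) + 2 + l + 1) ≠ 0 := by positivity
  have h3 : ((n : ℚ) + 1 + l + 2) ≠ 0 := by positivity
  have h4 : ((n : ℚ) + 1 + 1) ≠ 0 := by positivity
  push_cast
  field_simp
  ring

theorem partial_sum (l n m : ℕ) (hm : m ≤ n + 1) :
    ∑ k ∈ Finset.range (m + 1), (-1 : ℚ) ^ k * uQ l k * uQ l (n + 2 - k)
      - rhoQ (n + 2) l * ∑ k ∈ Finset.range m, (-1 : ℚ) ^ k * uQ l k * uQ l (n - k)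
    = -2 * (alpQ (n + 2) l - betQ (n + 2) l * (m + 1) * (n + 2 - m)) *
        ((-1) ^ m * uQ l m * uQ l (n + 1 - m)) := by
  induction m with
  | zero =>
    simp only [zero_add, Finset.sum_range_one, Finset.sum_range_zero, Nat.sub_zero]
    rw [edge l n]
    push_cast
    ring
  | succ m ih =>
    have ih := ih (by omega)
    obtain ⟨i, rfl⟩ : ∃ i, n = m + i := ⟨n - m, by omega⟩
    rw [Finset.sum_range_succ, Finset.sum_range_succ (fun k => (-1 : ℚ) ^ k * uQ l k * uQ l (m + i - k)) m]
    rw [show m + i + 2 - (m + 1) = i + 1 by omega, show m + i - m = i by omega,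
      show m + i + 1 - (m + 1) = i by omega]
    rw [show m + i + 1 - m = i + 1 by omega] at ih
    have hk := key_step l m i (by positivity) (by positivity) (by positivity)
    have hu := uQ_succ l m
    have hv := uQ_succ l i
    push_cast at ih ⊢
    rw [hv] at ih
    rw [hu, hv]
    rw [pow_succ]
    linear_combination ih - (-1) ^ m * uQ l m * uQ l i * hk

theorem AQ_rec (l n : ℕ) : AQ l (n + 2) = rhoQ (n + 2) l * AQ l n := by
  have h := partial_sum l n (n + 1) le_rfl
  have he := edge l n
  unfold AQ
  rw [Finset.sum_range_succ]
  simp only [Nat.sub_self] at h ⊢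
  push_cast at h
  rw [he]
  rw [show n + 2 = n + 1 + 1 from rfl] at h ⊢
  rw [pow_succ]
  linear_combination h

theorem AQ_odd (l m : ℕ) : AQ l (2 * m + 1) = 0 := by
  induction m with
  | zero => simp [AQ, Finset.sum_range_succ]; ring
  | succ m ih => rw [show 2 * (m + 1) + 1 = 2 * m + 1 + 2 by ring, AQ_rec, ih, mul_zero]

theorem pochQ_shift (x : ℚ) (l : ℕ) :
    pochQ (x + 2) l * (x * (x + 1)) = pochQ x l * ((x + l) * (x + l + 1)) := by
  induction l with
  | zero => simp [pochQ]
  | succ l ih =>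
    unfold pochQ at *
    rw [Finset.prod_range_succ, Finset.prod_range_succ]
    push_cast
    linear_combination (x + 2 + l) * ih

theorem pochQ_pos (x : ℚ) (hx : 0 < x) (l : ℕ) : 0 < pochQ x l :=
  Finset.prod_pos fun i _ => by positivity

theorem pochQ_two (l : ℕ) : pochQ 2 l = (l + 1).factorial := by
  induction l with
  | zero => simp [pochQ]
  | succ l ih =>
    unfold pochQ at *
    rw [Finset.prod_range_succ, ih, Nat.factorial_succ (l + 1)]
    push_cast
    ring

theorem AQ_even (l m : ℕ) : AQ l (2 * m) =
    (l.factorial : ℚ) / pochQ (((2 * m : ℕ) : ℚ) + 2) l * ((2 * l).choose l : ℚ)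
      / (m.factorial : ℚ) ^ 2 * (catalan (l + m) : ℚ) := by
  induction m with
  | zero =>
    have h1 : ((l : ℚ) + 1) * catalan l = ((2 * l).choose l : ℕ) := by
      rw [← Nat.centralBinom_eq_two_mul_choose]
      exact_mod_cast succ_mul_catalan_eq_centralBinom l
    simp only [AQ, uQ, mul_zero, zero_add, Finset.sum_range_one, Nat.cast_zero, pochQ_two,
      Nat.sub_self, Nat.factorial_zero, Nat.factorial_succ, add_zero]
    rw [← h1]
    have hf : (l.factorial : ℚ) ≠ 0 := by positivity
    have h2 : (l : ℚ) + 1 ≠ 0 := by positivity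
    push_cast
    field_simp
    try simp
  | succ m ih =>
    rw [show 2 * (m + 1) = 2 * m + 2 by ring, AQ_rec, ih, ← add_assoc, Nat.factorial_succ]
    have hp := pochQ_shift (((2 * m : ℕ) : ℚ) + 2) l
    have hc := cat_rec (l + m)
    have p1 := (pochQ_pos (((2 * m : ℕ) : ℚ) + 2) (by positivity) l).ne'
    have p2 := (pochQ_pos (((2 * m : ℕ) : ℚ) + 2 + 2) (by positivity) l).ne'
    push_cast at *
    have hf : (m.factorial : ℚ) ≠ 0 := by positivity
    have e1 : (m : ℚ) + 1 ≠ 0 := by positivity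
    have e2 : (l : ℚ) + m + 2 ≠ 0 := by positivity
    have e3 : 2 * (m : ℚ) + 2 + l ≠ 0 := by positivity
    have e4 : 2 * (m : ℚ) + 2 + l + 1 ≠ 0 := by positivity
    have e5 : 2 * (m : ℚ) + 2 ≠ 0 := by positivity
    have e6 : 2 * (m : ℚ) + 2 + 1 ≠ 0 := by positivity
    have e7 : 2 * (m : ℚ) + 2 + 2 * l + 2 ≠ 0 := by positivity
    have hp' : pochQ (2 * (m : ℚ) + 2 + 2) l = pochQ (2 * (m : ℚ) + 2) l *
        ((2 * (m : ℚ) + 2 + l) * (2 * m + 2 + l + 1)) / ((2 * m + 2) * (2 * m + 2 + 1)) := by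
      rw [← hp]; field_simp
    have hc' : (catalan (l + m + 1) : ℚ) =
        2 * (2 * ((l : ℚ) + m) + 1) * catalan (l + m) / (l + m + 2) := by
      rw [← hc]; field_simp
    rw [hp', hc']
    unfold rhoQ betQ
    field_simp
    ring

theorem sum_eq (n l : ℕ) :
    ∑ k ∈ Finset.range (n + 1),
        (-1 : ℚ) ^ k * (n.choose k : ℚ) * (catalan (k + l) : ℚ) * (catalan (n - k + l) : ℚ)
      = n.factorial * AQ l n := by
  unfold AQ
  rw [Finset.mul_sum]
  refine Finset.sum_congr rfl fun k hk => ?_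
  have hk : k ≤ n := by simp at hk; omega
  rw [Nat.cast_choose ℚ hk]
  unfold uQ
  field_simp

/-- Theorem A: alternating convolution of shifted Catalan numbers. -/
theorem stmt_0 (n lam : ℕ) :
    ∑ k ∈ Finset.range (n + 1),
        (-1 : ℚ) ^ k * (n.choose k : ℚ) * (catalan (k + lam) : ℚ) * (catalan (n - k + lam) : ℚ)
      = ((lam.factorial : ℚ) * (if Even n then 1 else 0) / pochQ ((n : ℚ) + 2) lam)
          * ((2 * lam).choose lam : ℚ) * (n.choose (n / 2) : ℚ) * (catalan (lam + n / 2) : ℚ) := by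
  rw [sum_eq]
  rcases Nat.even_or_odd' n with ⟨m, rfl | rfl⟩
  · rw [AQ_even, if_pos (even_two_mul m), show 2 * m / 2 = m by omega,
      Nat.cast_choose ℚ (show m ≤ 2 * m by omega), show 2 * m - m = m by omega]
    ring
  · rw [AQ_odd, if_neg (by simp)]
    ring
end

section
/- For all natural numbers n and λ, ∑_{k=0}^{n} (−1)^k · binom(n,k) · binom(2k+2λ, k+λ) · binom(2n−2k+2λ, n−k+λ) equals (λ! · χ(n even) / (n+1)_λ) · binom(2λ, λ) · binom(n, ⌊n/2⌋) · binom(2λ+n, λ+⌊n/2⌋), as an equality of rational numbers (the sum vanishes when n is odd). -/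
namespace ThmC

/-- central binomial coefficient as a rational -/
def cb (m : ℕ) : ℚ := (m.centralBinom : ℚ)

theorem cb_succ (m : ℕ) : cb (m + 1) = 2 * (2 * m + 1) / (m + 1) * cb m := by
  have h := Nat.succ_mul_centralBinom_succ m
  have h2 : ((m : ℚ) + 1) * cb (m + 1) = 2 * (2 * m + 1) * cb m := by
    unfold cb; exact_mod_cast h
  have : (m : ℚ) + 1 ≠ 0 := by positivity
  field_simp
  linarith

/-- summand -/
def F (l n k : ℕ) : ℚ := (-1) ^ k * (n.choose k : ℚ) * cb (k + l) * cb (n - k + l)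

/-- the sum -/
def S (l n : ℕ) : ℚ := ∑ k ∈ Finset.range (n + 1), F l n k

/-- certificate polynomial -/
def Q (l n k : ℚ) : ℚ :=
  (-10 - 32 * l - 22 * l ^ 2 - 4 * l ^ 3 - 23 * n - 43 * n * l - 14 * n * l ^ 2 - 17 * n ^ 2
    - 14 * n ^ 2 * l - 4 * n ^ 3)
  + (10 + 24 * l + 8 * l ^ 2 + 16 * n + 16 * n * l + 6 * n ^ 2) * k
  + (-2 - 4 * l - 2 * n) * k ^ 2

/-- telescoping certificate -/
def G (l n k : ℕ) : ℚ :=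
  k * (k + l) * Q l n k / ((n + 2) * (2 * ((n : ℚ) + 2 - k + l) - 1)) * F l (n + 2) k

def al (l n : ℚ) : ℚ := (n + l + 1) * (n + l + 2) * (2 * l + n + 2)
def be (l n : ℚ) : ℚ := 16 * (n + 1) ^ 2 * (2 * l + n + 1)

theorem choose_a (k m : ℕ) : ((k + m + 1).choose k : ℚ)
    = (k + m + 1) / (m + 1) * ((k + m).choose k : ℚ) := by
  have h := Nat.add_one_mul_choose_eq (k + m) m
  have e1 : (k + m).choose m = (k + m).choose k := (Nat.choose_symm_add).symm
  have e2 : (k + m + 1).choose (m + 1) = (k + m + 1).choose k :=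
    (Nat.choose_symm_of_eq_add (by ring))
  rw [e1, e2] at h
  have h2 : ((k : ℚ) + m + 1) * ((k + m).choose k : ℚ)
      = ((k + m + 1).choose k : ℚ) * (m + 1) := by exact_mod_cast h
  have : (m : ℚ) + 1 ≠ 0 := by positivity
  field_simp
  linarith

theorem choose_b (k m : ℕ) : ((k + m + 1).choose (k + 1) : ℚ)
    = (m + 1) / (k + 1) * ((k + m + 1).choose k : ℚ) := by
  have h := Nat.choose_succ_right_eq (k + m + 1) k
  have e : k + m + 1 - k = m + 1 := by omega
  rw [e] at h
  have h2 : ((k + m + 1).choose (k + 1) : ℚ) * (k + 1)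
      = ((k + m + 1).choose k : ℚ) * (m + 1) := by exact_mod_cast h
  have : (k : ℚ) + 1 ≠ 0 := by positivity
  field_simp
  linarith

theorem odd_ne (a : ℕ) : 2 * (a : ℚ) - 1 ≠ 0 := by
  intro h
  have : (2 * a : ℚ) = 1 := by linarith
  have : 2 * a = 1 := by exact_mod_cast this
  omega

theorem point_gen (l k m : ℕ) :
    al l (k + m : ℕ) * F l (k + m + 2) k - be l (k + m : ℕ) * F l (k + m) k
      = G l (k + m) (k + 1) - G l (k + m) k := by
  unfold G F
  have s1 : k + m + 2 - k + l = m + l + 1 + 1 := by omega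
  have s2 : k + m - k + l = m + l := by omega
  have s3 : k + m + 2 - (k + 1) + l = m + l + 1 := by omega
  have s4 : k + 1 + l = k + l + 1 := by omega
  have c1 := choose_a k m
  have c2 := choose_a k (m + 1)
  have c3 := choose_b k (m + 1)
  have s5 : k + (m + 1) + 1 = k + m + 2 := by omega
  have s6 : k + (m + 1) = k + m + 1 := by omega
  rw [s5] at c2 c3
  rw [s6] at c2
  rw [s1, s2, s3, s4, c3, c2, c1, cb_succ (m + l + 1), cb_succ (m + l), cb_succ (k + l)]
  generalize ((k + m).choose k : ℚ) = c
  generalize cb (k + l) = x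
  generalize cb (m + l) = y
  push_cast
  have n1 : (2 * (((k : ℚ) + m) + 2 - (k + 1) + l) - 1) = 2 * m + 2 * l + 1 := by ring
  have n2 : (2 * (((k : ℚ) + m) + 2 - k + l) - 1) = 2 * m + 2 * l + 3 := by ring
  rw [n1, n2, pow_succ]
  generalize ((-1 : ℚ) ^ k) = s
  unfold Q al be
  have : (m : ℚ) + 1 ≠ 0 := by positivity
  have : (m : ℚ) + 1 + 1 ≠ 0 := by positivity
  have : (k : ℚ) + 1 ≠ 0 := by positivity
  have : (m : ℚ) + l + 1 ≠ 0 := by positivity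
  have : (m : ℚ) + l + 1 + 1 ≠ 0 := by positivity
  have : (k : ℚ) + l + 1 ≠ 0 := by positivity
  have : (k : ℚ) + m + 2 ≠ 0 := by positivity
  have : 2 * (m : ℚ) + 2 * l + 1 ≠ 0 := by positivity
  have : 2 * (m : ℚ) + 2 * l + 3 ≠ 0 := by positivity
  field_simp
  ring

theorem point_1 (l n : ℕ) :
    al l n * F l (n + 2) (n + 1) = G l n (n + 2) - G l n (n + 1) := by
  unfold G F
  have s1 : n + 2 - (n + 1) + l = l + 1 := by omega
  have s2 : n + 2 - (n + 2) + l = l := by omega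
  have s4 : n + 2 + l = n + 1 + l + 1 := by omega
  have c1 : (n + 2).choose (n + 1) = n + 2 := Nat.choose_succ_self_right (n + 1)
  rw [s1, s2, s4, c1, Nat.choose_self, cb_succ l, cb_succ (n + 1 + l)]
  generalize cb (n + 1 + l) = x
  have hl := odd_ne l
  generalize hy : cb l = y
  push_cast
  have n1 : (2 * ((n : ℚ) + 2 - (n + 2) + l) - 1) = 2 * l - 1 := by ring
  have n2 : (2 * ((n : ℚ) + 2 - (n + 1) + l) - 1) = 2 * l + 1 := by ring
  rw [n1, n2, pow_succ _ (n + 1)]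
  generalize ((-1 : ℚ) ^ (n + 1)) = s
  generalize hd : 2 * (l : ℚ) - 1 = d at hl ⊢
  unfold Q al
  have : (l : ℚ) + 1 ≠ 0 := by positivity
  have : 2 * (l : ℚ) + 1 ≠ 0 := by positivity
  have : (n : ℚ) + 1 + l + 1 ≠ 0 := by positivity
  have : (n : ℚ) + 2 ≠ 0 := by positivity
  field_simp
  rw [← hd]
  ring

theorem point_2 (l n : ℕ) :
    al l n * F l (n + 2) (n + 2) = - G l n (n + 2) := by
  unfold G F
  have s2 : n + 2 - (n + 2) + l = l := by omega
  rw [s2]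
  have hl := odd_ne l
  push_cast
  have n1 : (2 * ((n : ℚ) + 2 - (n + 2) + l) - 1) = 2 * l - 1 := by ring
  rw [n1]
  generalize hd : 2 * (l : ℚ) - 1 = d at hl ⊢
  unfold Q al
  have : (n : ℚ) + 2 ≠ 0 := by positivity
  field_simp
  rw [← hd]
  ring

theorem S_rec (l n : ℕ) : al l n * S l (n + 2) = be l n * S l n := by
  have h1 : ∑ k ∈ Finset.range (n + 1), (al l n * F l (n + 2) k - be l n * F l n k)
      = G l n (n + 1) - G l n 0 := by
    rw [← Finset.sum_range_sub]
    refine Finset.sum_congr rfl fun k hk => ?_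
    obtain ⟨m, rfl⟩ := Nat.exists_eq_add_of_le (Nat.lt_succ_iff.mp (Finset.mem_range.mp hk))
    exact point_gen l k m
  have h0 : G l n 0 = 0 := by simp [G]
  rw [Finset.sum_sub_distrib, ← Finset.mul_sum, ← Finset.mul_sum, h0] at h1
  have h2 := point_1 l n
  have h3 := point_2 l n
  unfold S
  rw [Finset.sum_range_succ _ (n + 2), Finset.sum_range_succ _ (n + 1)]
  linear_combination h1 + h2 + h3

theorem al_ne (l n : ℕ) : al l n ≠ 0 := by unfold al; positivity

theorem S_odd (l m : ℕ) : S l (2 * m + 1) = 0 := by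
  induction m with
  | zero => simp [S, F, Finset.sum_range_succ, add_comm]; ring
  | succ m ih =>
    have h := S_rec l (2 * m + 1)
    rw [ih, mul_zero] at h
    exact (mul_eq_zero.mp h).resolve_left (al_ne _ _)

theorem poch_fac (n l : ℕ) : pochQ ((n : ℚ) + 1) l * n.factorial = (n + l).factorial := by
  induction l with
  | zero => simp [pochQ]
  | succ l ih =>
    have : pochQ ((n : ℚ) + 1) (l + 1) = pochQ ((n : ℚ) + 1) l * (n + 1 + l) := by
      simp [pochQ, Finset.prod_range_succ]
    rw [this, ← add_assoc, Nat.factorial_succ]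
    push_cast
    rw [← ih]; ring

theorem poch_eq (n l : ℕ) : pochQ ((n : ℚ) + 1) l = (n + l).factorial / n.factorial := by
  rw [← poch_fac]
  have : (n.factorial : ℚ) ≠ 0 := by positivity
  field_simp

theorem S_even (l m : ℕ) : S l (2 * m) =
    l.factorial * (2 * m).factorial / (2 * m + l).factorial * cb l * cb m * cb (l + m) := by
  induction m with
  | zero =>
    have : (l.factorial : ℚ) ≠ 0 := by positivity
    simp [S, F, cb]
    field_simp
    simp
  | succ m ih =>
    have h := S_rec l (2 * m)
    apply mul_left_cancel₀ (al_ne l (2 * m))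
    rw [show 2 * (m + 1) = 2 * m + 2 by ring, h, ih, ← add_assoc l, cb_succ, cb_succ,
      show 2 * m + 2 + l = 2 * m + l + 1 + 1 by ring]
    simp only [Nat.factorial_succ]
    unfold al be
    push_cast
    have : ((2 * m + l).factorial : ℚ) ≠ 0 := by positivity
    have : (m : ℚ) + 1 ≠ 0 := by positivity
    have : (l : ℚ) + m + 1 ≠ 0 := by positivity
    have : 2 * (m : ℚ) + l + 1 ≠ 0 := by positivity
    have : 2 * (m : ℚ) + l + 1 + 1 ≠ 0 := by positivity
    field_simp
    ring

end ThmC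


/-- Theorem C: alternating convolution of two central binomial coefficients. -/
theorem stmt_2 (n lam : ℕ) :
    ∑ k ∈ Finset.range (n + 1),
        (-1 : ℚ) ^ k * (n.choose k : ℚ) * ((2 * k + 2 * lam).choose (k + lam) : ℚ)
          * ((2 * n - 2 * k + 2 * lam).choose (n - k + lam) : ℚ)
      = ((lam.factorial : ℚ) * (if Even n then 1 else 0) / pochQ ((n : ℚ) + 1) lam)
          * ((2 * lam).choose lam : ℚ) * (n.choose (n / 2) : ℚ)
          * ((2 * lam + n).choose (lam + n / 2) : ℚ) := by

  have hS : ∑ k ∈ Finset.range (n + 1),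
        (-1 : ℚ) ^ k * (n.choose k : ℚ) * ((2 * k + 2 * lam).choose (k + lam) : ℚ)
          * ((2 * n - 2 * k + 2 * lam).choose (n - k + lam) : ℚ) = ThmC.S lam n := by
    refine Finset.sum_congr rfl fun k hk => ?_
    have hk' := Finset.mem_range.mp hk
    rw [ThmC.F, ThmC.cb, ThmC.cb, Nat.centralBinom, Nat.centralBinom,
      show 2 * (k + lam) = 2 * k + 2 * lam by ring,
      show 2 * (n - k + lam) = 2 * n - 2 * k + 2 * lam by omega]
  rw [hS]
  rcases Nat.even_or_odd' n with ⟨m, rfl | rfl⟩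
  · have e : Even (2 * m) := even_two_mul m
    rw [ThmC.S_even, if_pos e, ThmC.poch_eq, show 2 * m / 2 = m by omega,
      show 2 * lam + 2 * m = 2 * (lam + m) by ring]
    unfold ThmC.cb Nat.centralBinom
    have : ((2 * m + lam).factorial : ℚ) ≠ 0 := by positivity
    have : ((2 * m).factorial : ℚ) ≠ 0 := by positivity
    field_simp
  · have e : ¬ Even (2 * m + 1) := by simp
    rw [ThmC.S_odd, if_neg e]
    simp
end

section
/- For all natural numbers n ≥ 1 and λ, ∑_{k=0}^{n} (−1)^k · binom(n,k) · binom(2k+2λ, k+λ) · binom(2n−2k+2λ, n−k+λ) · (n−k+λ) equals (λ!/(n)_λ) · binom(n, ⌊n/2⌋) · binom(2λ, λ) · binom(2λ+n, λ+⌊n/2⌋) multiplied by n(2λ+n)/(2(λ+n)) when n is even, and by (n+1)(2λ+n+1)/(2(λ+n)) when n is odd, as an equality of rational numbers. -/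
/-- Central binomial as a rational. -/
def cbQ (m : ℕ) : ℚ := (m.centralBinom : ℚ)

lemma cbQ_succ (m : ℕ) : ((m : ℚ) + 1) * cbQ (m + 1) = 2 * (2 * m + 1) * cbQ m := by
  unfold cbQ
  exact_mod_cast Nat.succ_mul_centralBinom_succ m

lemma cbQ_fac (m : ℕ) : cbQ m * ((m.factorial : ℚ) * m.factorial) = ((2 * m).factorial : ℚ) := by
  unfold cbQ
  have h := Nat.choose_mul_factorial_mul_factorial (n := 2 * m) (k := m) (by omega)
  rw [show 2 * m - m = m by omega] at h
  rw [Nat.centralBinom_eq_two_mul_choose, ← h]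
  push_cast
  ring

/-- General term. -/
def trm (M l k : ℕ) : ℚ := (-1 : ℚ) ^ k * (M.choose k : ℚ) * cbQ (k + l) * cbQ (M - k + l)

/-- Weighted sum. -/
def wS (e : ℚ → ℚ) (M l : ℕ) : ℚ :=
  ∑ k ∈ Finset.range (M + 1), trm M l k * e ((M : ℚ) - 2 * k)

/-- Telescoping function. -/
def gT (M l k : ℕ) : ℚ :=
  trm M l k * k * ((k : ℚ) + l) * (2 * ((M : ℚ) - k + l) + 1)

lemma gT_succ (M l k : ℕ) (hk : k ≤ M) :
    gT M l (k + 1) = - (trm M l k * ((M : ℚ) - k) * (2 * ((k : ℚ) + l) + 1) * ((M : ℚ) - k + l)) := by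
  rcases Nat.lt_or_ge k M with h | h
  · obtain ⟨d, rfl⟩ : ∃ d, M = k + 1 + d := ⟨M - (k + 1), by omega⟩
    unfold gT trm
    have h1 := cbQ_succ (k + l)
    have h2 := cbQ_succ (d + l)
    have h3 : ((k + 1 + d).choose (k + 1) : ℚ) * (k + 1) = ((k + 1 + d).choose k : ℚ) * (d + 1) := by
      have := Nat.choose_succ_right_eq (k + 1 + d) k
      rw [show k + 1 + d - k = d + 1 by omega] at this
      exact_mod_cast this
    rw [show k + 1 + d - (k + 1) + l = d + l by omega, show k + 1 + d - k + l = d + l + 1 by omega,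
      show k + 1 + l = k + l + 1 by omega]
    push_cast at *
    rw [pow_succ]
    have e1 : ∀ s B B' a a' b b' : ℚ, B' * (k + 1) = B * (d + 1) →
        ((k : ℚ) + l + 1) * a' = 2 * (2 * (k + l) + 1) * a →
        ((d : ℚ) + l + 1) * b' = 2 * (2 * (d + l) + 1) * b →
        s * -1 * B' * a' * b * (k + 1) * (k + 1 + l) * (2 * (k + 1 + d - (k + 1) + l) + 1)
        = -(s * B * a * b' * (k + 1 + d - k) * (2 * (k + l) + 1) * (k + 1 + d - k + l)) := by
      intro s B B' a a' b b' x y z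
      linear_combination (-s * a' * b * (k + 1 + l) * (2 * (d + l) + 1)) * x
        - s * B * (d + 1) * b * (2 * (d + l) + 1) * y
        + s * B * (d + 1) * a * (2 * (k + l) + 1) * z
    exact e1 _ _ _ _ _ _ _ h3 h1 h2
  · have : k = M := by omega
    subst this
    simp [gT, trm]

lemma gT_zero (M l : ℕ) : gT M l 0 = 0 := by simp [gT]

lemma gT_last (M l : ℕ) : gT M l (M + 1) = 0 := by simp [gT, trm]

lemma shift (e : ℚ → ℚ) (p l : ℕ) :
    ∑ k ∈ Finset.range (p + 2 + 1), trm (p + 2) l k * (k * (((p + 2 : ℕ) : ℚ) - k))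
      * e (((p + 2 : ℕ) : ℚ) - 2 * k)
    = - ((p + 2) * (p + 1)) * wS e p (l + 1) := by
  rw [Finset.sum_range_succ, Finset.sum_range_succ']
  simp only [sub_self, mul_zero, zero_mul, add_zero, Nat.cast_zero]
  unfold wS
  rw [Finset.mul_sum]
  apply Finset.sum_congr rfl
  intro k hk
  have hk' : k ≤ p := by simpa [Nat.lt_succ_iff] using hk
  obtain ⟨d, rfl⟩ := Nat.exists_eq_add_of_le hk'
  have h1 : ((k + d + 2).choose (k + 1) : ℚ) * (k + 1) = (k + d + 2) * ((k + d + 1).choose k : ℚ) := by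
    have := Nat.add_one_mul_choose_eq (k + d + 1) k
    exact_mod_cast this.symm
  have h2 : ((k + d + 1).choose k : ℚ) * (d + 1) = (k + d + 1) * ((k + d).choose k : ℚ) := by
    have := Nat.choose_mul_succ_eq (k + d) k
    rw [show k + d + 1 - k = d + 1 by omega] at this
    have h : ((k + d).choose k : ℚ) * (k + d + 1) = (k + d + 1).choose k * (d + 1) := by
      exact_mod_cast this
    linarith
  unfold trm
  rw [show k + 1 + l = k + (l + 1) by omega,
    show k + d + 2 - (k + 1) + l = k + d - k + (l + 1) by omega]
  have he : (((k + d + 2 : ℕ) : ℚ) - 2 * ((k + 1 : ℕ) : ℚ)) = ((k + d : ℕ) : ℚ) - 2 * k := by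
    push_cast; ring
  rw [he, pow_succ]
  push_cast
  generalize e _ = E
  generalize cbQ _ = A
  generalize cbQ _ = B
  linear_combination (-(-1) ^ k * A * B * E * (d + 1)) * h1 + (-(-1) ^ k * A * B * E * (k + d + 2)) * h2

lemma recS (p l : ℕ) :
    ((p : ℚ) + 2 + l) * (2 * l + 1) * wS (fun _ => 1) (p + 2) l
      = 2 * (p + 1) ^ 2 * wS (fun _ => 1) p (l + 1) := by
  have ht := Finset.sum_range_sub (gT (p + 2) l) (p + 2 + 1)
  rw [gT_last, gT_zero] at ht
  have hs := shift (fun _ => 1) p l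
  have : ∑ k ∈ Finset.range (p + 2 + 1), (gT (p + 2) l (k + 1) - gT (p + 2) l k)
      = - (2 * (p + 1)) * (∑ k ∈ Finset.range (p + 2 + 1),
          trm (p + 2) l k * (k * (((p + 2 : ℕ) : ℚ) - k)) * 1)
        - (p + 2) * (((p : ℚ) + 2 + l) * (2 * l + 1)) * wS (fun _ => 1) (p + 2) l := by
    unfold wS
    rw [Finset.mul_sum, Finset.mul_sum, ← Finset.sum_sub_distrib]
    apply Finset.sum_congr rfl
    intro k hk
    rw [gT_succ _ _ _ (by simpa [Nat.lt_succ_iff] using hk)]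
    unfold gT
    push_cast
    ring
  rw [this, hs] at ht
  have h0 : (p : ℚ) + 2 ≠ 0 := by positivity
  apply mul_left_cancel₀ h0
  linear_combination -ht

lemma recD (p l : ℕ) :
    ((p : ℚ) + 2 + l) * (2 * l + 1) * wS (fun x => x) (p + 2) l
      = 2 * (p + 2) * p * wS (fun x => x) p (l + 1) := by
  have ht := Finset.sum_range_sub (fun k => gT (p + 2) l k * (2 * k - (p + 2) - 1)) (p + 2 + 1)
  simp only [gT_last, gT_zero] at ht
  have hs := shift (fun x => x) p l
  have : ∑ k ∈ Finset.range (p + 2 + 1),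
      (gT (p + 2) l (k + 1) * (2 * ((k + 1 : ℕ) : ℚ) - (p + 2) - 1)
        - gT (p + 2) l k * (2 * k - (p + 2) - 1))
      = (2 * p) * (∑ k ∈ Finset.range (p + 2 + 1),
          trm (p + 2) l k * (k * (((p + 2 : ℕ) : ℚ) - k)) * (((p + 2 : ℕ) : ℚ) - 2 * k))
        + (p + 1) * (((p : ℚ) + 2 + l) * (2 * l + 1)) * wS (fun x => x) (p + 2) l := by
    unfold wS
    rw [Finset.mul_sum, Finset.mul_sum, ← Finset.sum_add_distrib]
    apply Finset.sum_congr rfl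
    intro k hk
    rw [gT_succ _ _ _ (by simpa [Nat.lt_succ_iff] using hk)]
    unfold gT
    push_cast
    ring
  rw [this, hs] at ht
  have h0 : (p : ℚ) + 1 ≠ 0 := by positivity
  apply mul_left_cancel₀ h0
  linear_combination ht

lemma S_odd (m : ℕ) : ∀ l, wS (fun _ => 1) (2 * m + 1) l = 0 := by
  induction m with
  | zero =>
    intro l
    simp [wS, trm, Finset.sum_range_succ]
    ring
  | succ m ih =>
    intro l
    have h := recS (2 * m + 1) l
    rw [ih, mul_zero] at h
    have h0 : (((2 * m + 1 : ℕ) : ℚ) + 2 + l) * (2 * l + 1) ≠ 0 := by positivity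
    exact (mul_eq_zero.mp h).resolve_left h0

lemma D_even (m : ℕ) : ∀ l, wS (fun x => x) (2 * m) l = 0 := by
  induction m with
  | zero =>
    intro l
    simp [wS, trm]
  | succ m ih =>
    intro l
    have h := recD (2 * m) l
    rw [ih, mul_zero] at h
    have h0 : (((2 * m : ℕ) : ℚ) + 2 + l) * (2 * l + 1) ≠ 0 := by positivity
    exact (mul_eq_zero.mp h).resolve_left h0

lemma fpos (m : ℕ) : (m.factorial : ℚ) ≠ 0 := by exact_mod_cast m.factorial_ne_zero

lemma S_even (m : ℕ) : ∀ l, wS (fun _ => 1) (2 * m) l *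
    (((l + 2 * m).factorial : ℚ) * l.factorial * m.factorial ^ 2 * (l + m).factorial ^ 2)
    = ((2 * m).factorial : ℚ) ^ 2 * (2 * l).factorial * (2 * l + 2 * m).factorial := by
  induction m with
  | zero =>
    intro l
    have h := cbQ_fac l
    simp [wS, trm]
    rw [← h]
    ring
  | succ m ih =>
    intro l
    have h := recS (2 * m) l
    have i := ih (l + 1)
    have h0 : (((2 * m : ℕ) : ℚ) + 2 + l) * (2 * l + 1) ≠ 0 := by positivity
    rw [show 2 * (m + 1) = 2 * m + 2 by ring]
    apply mul_left_cancel₀ h0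
    rw [← mul_assoc, h]
    rw [show l + 1 + 2 * m = l + 2 * m + 1 by ring, show l + 1 + m = l + m + 1 by ring,
      show 2 * (l + 1) + 2 * m = 2 * l + 2 * m + 1 + 1 by ring,
      show 2 * (l + 1) = 2 * l + 1 + 1 by ring] at i
    rw [show l + (2 * m + 2) = l + 2 * m + 1 + 1 by ring, show l + (m + 1) = l + m + 1 by ring,
      show 2 * l + (2 * m + 2) = 2 * l + 2 * m + 1 + 1 by ring]
    simp only [Nat.factorial_succ (2 * m + 1), Nat.factorial_succ (2 * m), Nat.factorial_succ m,
      Nat.factorial_succ (l + 2 * m + 1), Nat.factorial_succ (2 * l + 1), Nat.factorial_succ (2 * l),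
      Nat.factorial_succ l] at i ⊢
    push_cast at i ⊢
    have hl : (l : ℚ) + 1 ≠ 0 := by positivity
    apply mul_left_cancel₀ hl
    linear_combination (2 * (2 * m + 1) ^ 2 * ((l : ℚ) + 2 * m + 1 + 1) * (m + 1) ^ 2) * i

lemma D_odd (m : ℕ) : ∀ l, wS (fun x => x) (2 * m + 1) l *
    (((l + 2 * m + 1).factorial : ℚ) * l.factorial * m.factorial ^ 2 * (l + m).factorial ^ 2)
    = 4 * ((2 * m).factorial : ℚ) * (2 * m + 1).factorial * (2 * l).factorial
      * (2 * l + 2 * m + 1).factorial := by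
  induction m with
  | zero =>
    intro l
    have h := cbQ_fac l
    have h2 := cbQ_succ l
    simp [wS, trm, Finset.sum_range_succ, Nat.factorial_succ]
    rw [← h, add_comm 1 l]
    linear_combination (2 * cbQ l * l.factorial ^ 4) * h2
  | succ m ih =>
    intro l
    have h := recD (2 * m + 1) l
    have i := ih (l + 1)
    have h0 : (((2 * m + 1 : ℕ) : ℚ) + 2 + l) * (2 * l + 1) ≠ 0 := by positivity
    rw [show 2 * (m + 1) = 2 * m + 2 by ring]
    rw [show 2 * m + 2 + 1 = 2 * m + 1 + 2 by ring]
    apply mul_left_cancel₀ h0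
    rw [← mul_assoc, h]
    rw [show l + 1 + 2 * m + 1 = l + 2 * m + 1 + 1 by ring, show l + 1 + m = l + m + 1 by ring,
      show 2 * (l + 1) + 2 * m + 1 = 2 * l + 2 * m + 1 + 1 + 1 by ring,
      show 2 * (l + 1) = 2 * l + 1 + 1 by ring] at i
    rw [show l + (2 * m + 2) + 1 = l + 2 * m + 1 + 1 + 1 by ring, show l + (m + 1) = l + m + 1 by ring,
      show 2 * l + (2 * m + 2) + 1 = 2 * l + 2 * m + 1 + 1 + 1 by ring]
    simp only [Nat.factorial_succ (2 * m + 1 + 1), Nat.factorial_succ (2 * m + 1),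
      Nat.factorial_succ (2 * m), Nat.factorial_succ m,
      Nat.factorial_succ (l + 2 * m + 1 + 1), Nat.factorial_succ (2 * l + 1),
      Nat.factorial_succ (2 * l), Nat.factorial_succ l] at i ⊢
    push_cast at i ⊢
    have hl : (l : ℚ) + 1 ≠ 0 := by positivity
    apply mul_left_cancel₀ hl
    linear_combination (2 * (2 * m + 3) * (2 * m + 1) * ((l : ℚ) + 2 * m + 1 + 1 + 1) * (m + 1) ^ 2) * i

lemma poch_fac (n : ℕ) (l : ℕ) : pochQ ((n : ℚ) + 1) l * n.factorial = ((n + l).factorial : ℚ) := by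
  induction l with
  | zero => simp [pochQ]
  | succ l ih =>
    have : pochQ ((n : ℚ) + 1) (l + 1) = pochQ ((n : ℚ) + 1) l * ((n : ℚ) + 1 + l) := by
      simp [pochQ, Finset.prod_range_succ]
    rw [this, ← add_assoc, Nat.factorial_succ]
    push_cast
    rw [← ih]
    ring

lemma choose_fac (a b : ℕ) :
    ((a + b).choose a : ℚ) = ((a + b).factorial : ℚ) / (a.factorial * b.factorial) := by
  rw [eq_div_iff (mul_ne_zero (fpos _) (fpos _))]
  have := Nat.add_choose_mul_factorial_mul_factorial a b
  rw [Nat.choose_symm_add.symm] at this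
  rw [← mul_assoc]
  exact_mod_cast this

lemma lhs_eq (n lam : ℕ) :
    ∑ k ∈ Finset.range (n + 1),
        (-1 : ℚ) ^ k * (n.choose k : ℚ) * ((2 * k + 2 * lam).choose (k + lam) : ℚ)
          * ((2 * n - 2 * k + 2 * lam).choose (n - k + lam) : ℚ) * ((n : ℚ) - k + lam)
      = ((n : ℚ) + 2 * lam) / 2 * wS (fun _ => 1) n lam + 1 / 2 * wS (fun x => x) n lam := by
  unfold wS
  rw [Finset.mul_sum, Finset.mul_sum, ← Finset.sum_add_distrib]
  apply Finset.sum_congr rfl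
  intro k hk
  unfold trm cbQ
  rw [Nat.centralBinom_eq_two_mul_choose, Nat.centralBinom_eq_two_mul_choose,
    show 2 * k + 2 * lam = 2 * (k + lam) by ring,
    show 2 * n - 2 * k + 2 * lam = 2 * (n - k + lam) by omega]
  ring

/-- Theorem D: alternating convolution of two central binomial coefficients
with the extra linear factor `n - k + λ`. -/
theorem stmt_3 (n lam : ℕ) (hn : 1 ≤ n) :
    ∑ k ∈ Finset.range (n + 1),
        (-1 : ℚ) ^ k * (n.choose k : ℚ) * ((2 * k + 2 * lam).choose (k + lam) : ℚ)
          * ((2 * n - 2 * k + 2 * lam).choose (n - k + lam) : ℚ) * ((n : ℚ) - k + lam)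
      = ((lam.factorial : ℚ) / pochQ (n : ℚ) lam)
          * (n.choose (n / 2) : ℚ) * ((2 * lam).choose lam : ℚ)
          * ((2 * lam + n).choose (lam + n / 2) : ℚ)
          * (if Even n then (n : ℚ) * (2 * lam + n) / (2 * ((lam : ℚ) + n))
             else ((n : ℚ) + 1) * (2 * lam + n + 1) / (2 * ((lam : ℚ) + n))) := by
  rw [lhs_eq]
  have hc := choose_fac lam lam
  rw [← two_mul] at hc
  rw [hc]
  have hp : pochQ (n : ℚ) lam = ((n - 1 + lam).factorial : ℚ) / (n - 1).factorial := by
    rw [eq_div_iff (fpos _), ← poch_fac]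
    congr 2
    have : n = n - 1 + 1 := by omega
    exact_mod_cast this
  rw [hp]
  have f1 := fpos lam
  rcases Nat.even_or_odd' n with ⟨m, rfl | rfl⟩
  · obtain ⟨q, rfl⟩ : ∃ q, m = q + 1 := ⟨m - 1, by omega⟩
    rw [D_even, if_pos (by simp)]
    have h := S_even (q + 1) lam
    rw [← eq_div_iff (by have := fpos (lam + 2 * (q + 1)); have := fpos (q + 1);
                         have := fpos (lam + (q + 1)); positivity)] at h
    rw [h]
    have c1 := choose_fac (q + 1) (q + 1)
    have c2 := choose_fac (lam + (q + 1)) (lam + (q + 1))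
    rw [show 2 * (q + 1) / 2 = q + 1 by omega]
    rw [← two_mul] at c1
    rw [show lam + (q + 1) + (lam + (q + 1)) = 2 * lam + 2 * (q + 1) by ring] at c2
    rw [c1, c2]
    rw [show 2 * (q + 1) - 1 + lam = lam + 2 * q + 1 by omega, show 2 * (q + 1) - 1 = 2 * q + 1 by omega,
      show lam + 2 * (q + 1) = lam + 2 * q + 1 + 1 by ring, Nat.factorial_succ (lam + 2 * q + 1)]
    rw [show (2 * (q + 1)).factorial = (2 * q + 2) * (2 * q + 1).factorial from
      Nat.factorial_succ (2 * q + 1)]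
    have g1 := fpos (lam + 2 * q + 1)
    have g2 := fpos (2 * q + 1)
    have g3 := fpos (q + 1)
    have g4 := fpos (lam + (q + 1))
    have g5 : (lam : ℚ) + 2 * q + 1 + 1 ≠ 0 := by positivity
    have g6 : (lam : ℚ) + 2 * (q + 1) ≠ 0 := by positivity
    push_cast
    field_simp
    ring
  · rw [S_odd, if_neg (by simp)]
    have h := D_odd m lam
    rw [← eq_div_iff (by have := fpos (lam + 2 * m + 1); have := fpos m;
                         have := fpos (lam + m); positivity)] at h
    rw [h]
    have c1 := choose_fac m (m + 1)
    have c2 := choose_fac (lam + m) (lam + m + 1)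
    rw [show (2 * m + 1) / 2 = m by omega]
    rw [show m + (m + 1) = 2 * m + 1 by ring] at c1
    rw [show lam + m + (lam + m + 1) = 2 * lam + (2 * m + 1) by ring] at c2
    rw [c1, c2]
    rw [show 2 * m + 1 - 1 + lam = lam + 2 * m by omega, show 2 * m + 1 - 1 = 2 * m by omega,
      Nat.factorial_succ (lam + 2 * m), Nat.factorial_succ m, Nat.factorial_succ (lam + m),
      ← add_assoc]
    have g1 := fpos (lam + 2 * m)
    have g2 := fpos (2 * m)
    have g3 := fpos m
    have g4 := fpos (lam + m)
    have g5 : (lam : ℚ) + 2 * m + 1 ≠ 0 := by positivity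
    have g6 : (lam : ℚ) + (2 * m + 1) ≠ 0 := by positivity
    have g7 : (lam : ℚ) + m + 1 ≠ 0 := by positivity
    have g8 : (m : ℚ) + 1 ≠ 0 := by positivity
    push_cast
    field_simp
    ring
end

section
/- Let a, c, λ be real numbers such that λ ≠ 0, λ is not a negative integer, and c is not zero or a negative integer. Then for every real x, the product of the two everywhere-convergent series (∑_{k=0}^{∞} (a)_k x^k / ((c)_k · k!)) · (∑_{k=0}^{∞} (1+λ)_k (a)_k (−x)^k / ((λ)_k (c)_k · k!)) equals ∑_{k=0}^{∞} (1+λ)_k (a)_k (c−a)_k (x²/4)^k / ((λ)_k (c)_k (c/2)_k ((1+c)/2)_k · k!) minus (a x/(c λ)) · ∑_{k=0}^{∞} (1+a)_k (c−a)_k (x²/4)^k / ((c)_k ((1+c)/2)_k ((2+c)/2)_k · k!). -/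
/-- Real Pochhammer symbol: `(x)_0 = 1`, `(x)_n = x(x+1)⋯(x+n-1)`. -/
def poch (x : ℝ) (n : ℕ) : ℝ := ∏ i ∈ Finset.range n, (x + i)

namespace Aux5
open PowerSeries

lemma poch_zero (x : ℝ) : poch x 0 = 1 := by simp [poch]

lemma poch_succ (x : ℝ) (n : ℕ) : poch x (n + 1) = poch x n * (x + n) := by
  simp [poch, Finset.prod_range_succ]

lemma poch_ne (x : ℝ) (h : ∀ m : ℕ, x ≠ -(m : ℝ)) (n : ℕ) : poch x n ≠ 0 := by
  rw [poch, Finset.prod_ne_zero_iff]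
  intro i _ h0
  exact h i (by linarith)

lemma poch_shift (x : ℝ) (n : ℕ) : x * poch (1 + x) n = poch x n * (x + n) := by
  induction n with
  | zero => simp [poch_zero]
  | succ n ih =>
    rw [poch_succ, poch_succ, ← mul_assoc, ih]
    push_cast
    ring

/-- coefficients -/
noncomputable def fc (a c : ℝ) (k : ℕ) : ℝ := poch a k / (poch c k * k.factorial)

lemma fc_succ (a c : ℝ) (hc : ∀ m : ℕ, c ≠ -(m : ℝ)) (k : ℕ) :
    ((k : ℝ) + 1) * (c + k) * fc a c (k + 1) = (a + k) * fc a c k := by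
  have h1 := poch_ne c hc k
  have h2 : c + k ≠ 0 := fun h => hc k (by linarith)
  have h3 : ((k.factorial : ℕ) : ℝ) ≠ 0 := by exact_mod_cast k.factorial_ne_zero
  have h4 : (k : ℝ) + 1 ≠ 0 := by positivity
  rw [fc, fc, poch_succ, poch_succ, Nat.factorial_succ]
  push_cast
  field_simp

/-- shifted parameter -/
def cm (c : ℝ) : ℝ := c - 1

/-- Euler operator -/
noncomputable def th (A : PowerSeries ℝ) : PowerSeries ℝ := X * derivative ℝ A

lemma th_mul (A B : PowerSeries ℝ) : th (A * B) = th A * B + A * th B := by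
  simp only [th, Derivation.leibniz, smul_eq_mul]
  ring

lemma th_add (A B : PowerSeries ℝ) : th (A + B) = th A + th B := by
  simp only [th, map_add]
  ring

lemma th_sub (A B : PowerSeries ℝ) : th (A - B) = th A - th B := by
  have := th_add (A - B) B
  rw [sub_add_cancel] at this
  rw [this]; ring

lemma coeff_th (A : PowerSeries ℝ) (n : ℕ) : coeff n (th A) = n * coeff n A := by
  cases n with
  | zero => simp [th]
  | succ n =>
    rw [th, coeff_succ_X_mul, coeff_derivative]
    push_cast
    ring

noncomputable def U (a c : ℝ) : PowerSeries ℝ := PowerSeries.mk (fc a c)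
noncomputable def V (a c : ℝ) : PowerSeries ℝ := rescale (-1) (U a c)

lemma coeff_U (a c : ℝ) (n : ℕ) : coeff n (U a c) = fc a c n := by simp [U]
lemma coeff_V (a c : ℝ) (n : ℕ) : coeff n (V a c) = (-1) ^ n * fc a c n := by
  simp [V, coeff_rescale, coeff_U]

lemma odeU (a c : ℝ) (hc : ∀ m : ℕ, c ≠ -(m : ℝ)) :
    th (th (U a c)) = X * th (U a c) + C a * (X * U a c) - C (cm c) * th (U a c) := by
  ext n
  cases n with
  | zero => simp [coeff_th, th]
  | succ n =>
    simp only [map_sub, map_add, coeff_C_mul, coeff_succ_X_mul, coeff_th, coeff_U]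
    have := fc_succ a c hc n
    push_cast
    simp only [cm]
    linear_combination this

lemma odeV (a c : ℝ) (hc : ∀ m : ℕ, c ≠ -(m : ℝ)) :
    th (th (V a c)) = - (X * th (V a c)) - C a * (X * V a c) - C (cm c) * th (V a c) := by
  ext n
  cases n with
  | zero => simp [coeff_th, th]
  | succ n =>
    simp only [map_sub, map_neg, coeff_C_mul, coeff_succ_X_mul, coeff_th, coeff_V]
    have := fc_succ a c hc n
    push_cast
    rw [pow_succ]
    simp only [cm]
    linear_combination (-(-1) ^ n) * this

noncomputable def P (a c : ℝ) := U a c * V a c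
noncomputable def Q (a c : ℝ) := th (U a c) * V a c - U a c * th (V a c)
noncomputable def R (a c : ℝ) := th (U a c) * th (V a c)

lemma eqP (a c : ℝ) (hc : ∀ m : ℕ, c ≠ -(m : ℝ)) :
    th (th (P a c)) = C 2 * R a c + X * Q a c - C (cm c) * th (P a c) := by
  have e : (C 2 : PowerSeries ℝ) = 2 := map_ofNat _ 2
  simp only [P, Q, R, th_mul, th_add, odeU a c hc, odeV a c hc, e]
  ring

lemma eqQ (a c : ℝ) (hc : ∀ m : ℕ, c ≠ -(m : ℝ)) :
    th (Q a c) = X * th (P a c) + C (2 * a) * (X * P a c) - C (cm c) * Q a c := by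
  have e : (C (2 * a) : PowerSeries ℝ) = 2 * C a := by rw [map_mul, map_ofNat]
  simp only [P, Q, th_mul, th_sub, odeU a c hc, odeV a c hc, e]
  ring

lemma eqR (a c : ℝ) (hc : ∀ m : ℕ, c ≠ -(m : ℝ)) :
    th (R a c) = - (C a * (X * Q a c)) - C (2 * cm c) * R a c := by
  have e : (C (2 * cm c) : PowerSeries ℝ) = 2 * C (cm c) := by rw [map_mul, map_ofNat]
  simp only [R, Q, th_mul, odeU a c hc, odeV a c hc, e]
  ring

lemma P_odd (a c : ℝ) (m : ℕ) : coeff (2 * m + 1) (P a c) = 0 := by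
  have h : rescale (-1) (P a c) = P a c := by
    rw [P, map_mul, V, rescale_rescale]
    simp [mul_comm]
  have h2 := congrArg (coeff (2 * m + 1)) h
  rw [coeff_rescale, pow_succ, pow_mul] at h2
  norm_num at h2
  linarith

lemma recQ (a c : ℝ) (hc : ∀ m : ℕ, c ≠ -(m : ℝ)) (n : ℕ) :
    (n + c) * coeff (n + 1) (Q a c) = (n + 2 * a) * coeff n (P a c) := by
  have h := congrArg (coeff (n + 1)) (eqQ a c hc)
  simp only [map_sub, map_add, coeff_C_mul, coeff_succ_X_mul, coeff_th] at h
  simp only [cm] at h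
  push_cast at h
  linear_combination h

lemma Q_even (a c : ℝ) (hc : ∀ m : ℕ, c ≠ -(m : ℝ)) (m : ℕ) : coeff (2 * m) (Q a c) = 0 := by
  cases m with
  | zero => simp [Q, th]
  | succ m =>
    have h := recQ a c hc (2 * m + 1)
    rw [P_odd, mul_zero] at h
    rcases mul_eq_zero.1 h with h | h
    · exact absurd (by linarith) (hc (2 * m + 1))
    · exact h

lemma recP (a c : ℝ) (hc : ∀ m : ℕ, c ≠ -(m : ℝ)) (m : ℕ) :
    (2 * m + 1 + c) * (2 * m + 2) * (m + c) * coeff (2 * (m + 1)) (P a c)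
      = (m + c - a) * coeff (2 * m + 1) (Q a c) := by
  have h := congrArg (coeff (2 * m + 1 + 1)) (eqP a c hc)
  have h' := congrArg (coeff (2 * m + 1 + 1)) (eqR a c hc)
  simp only [map_sub, map_add, map_neg, coeff_C_mul, coeff_succ_X_mul, coeff_th] at h h'
  simp only [cm] at h h'
  push_cast at h h'
  rw [show 2 * (m + 1) = 2 * m + 1 + 1 by ring]
  linear_combination (m + c) * h + h'

lemma half_ne (c : ℝ) (hc : ∀ m : ℕ, c ≠ -(m : ℝ)) (j : ℕ) (m : ℕ) :
    (j + c) / 2 ≠ -(m : ℝ) := by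
  intro h
  apply hc (2 * m + j)
  push_cast
  linarith

lemma P_even (a c : ℝ) (hc : ∀ m : ℕ, c ≠ -(m : ℝ)) (m : ℕ) :
    coeff (2 * m) (P a c) = poch a m * poch (c - a) m * (1 / 4) ^ m /
      (poch c m * poch (c / 2) m * poch ((1 + c) / 2) m * m.factorial) := by
  induction m with
  | zero =>
    have h1 := coeff_U a c 0
    have h2 := coeff_V a c 0
    simp [fc, poch_zero] at h1 h2
    simp [P, poch_zero, h1, h2]
  | succ m ih =>
    have h1 := recP a c hc m
    have h2 := recQ a c hc (2 * m)
    rw [ih] at h2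
    have n1 := poch_ne c hc m
    have n2 := poch_ne (c / 2) (by simpa using half_ne c hc 0) m
    have n3 := poch_ne ((1 + c) / 2) (by simpa using half_ne c hc 1) m
    have n4 : ((m.factorial : ℕ) : ℝ) ≠ 0 := by exact_mod_cast m.factorial_ne_zero
    have n5 : (m : ℝ) + 1 ≠ 0 := by positivity
    have n6 : c + m ≠ 0 := fun h => hc m (by linarith)
    have n7 : c + 2 * m ≠ 0 := fun h => hc (2 * m) (by push_cast; linarith)
    have n8 : c + 2 * m + 1 ≠ 0 := fun h => hc (2 * m + 1) (by push_cast; linarith)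
    have m7 : c / 2 + m ≠ 0 := fun h => n7 (by linarith)
    have m8 : (1 + c) / 2 + m ≠ 0 := fun h => n8 (by linarith)
    have e : coeff (2 * (m + 1)) (P a c) = (m + c - a) * (2 * m + 2 * a) /
        ((c + 2 * m + 1) * (2 * (m + 1)) * (c + m) * (c + 2 * m)) *
        (poch a m * poch (c - a) m * (1 / 4) ^ m /
      (poch c m * poch (c / 2) m * poch ((1 + c) / 2) m * m.factorial)) := by
      rw [div_mul_eq_mul_div, eq_div_iff (by positivity)]
      push_cast at h2
      linear_combination (c + 2 * m) * h1 + (m + c - a) * h2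
    rw [e]
    simp only [poch_succ, Nat.factorial_succ]
    rw [show c / 2 + (m : ℝ) = (c + 2 * m) / 2 by ring,
      show (1 + c) / 2 + (m : ℝ) = (c + 2 * m + 1) / 2 by ring]
    push_cast
    field_simp
    ring

lemma Q_odd (a c : ℝ) (hc : ∀ m : ℕ, c ≠ -(m : ℝ)) (m : ℕ) :
    coeff (2 * m + 1) (Q a c) = 2 * a / c * (poch (1 + a) m * poch (c - a) m * (1 / 4) ^ m /
      (poch c m * poch ((1 + c) / 2) m * poch ((2 + c) / 2) m * m.factorial)) := by
  have h2 := recQ a c hc (2 * m)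
  rw [P_even a c hc] at h2
  have n0 : c ≠ 0 := by simpa using hc 0
  have n1 := poch_ne c hc m
  have n2 := poch_ne (c / 2) (by simpa using half_ne c hc 0) m
  have n3 := poch_ne ((1 + c) / 2) (by simpa using half_ne c hc 1) m
  have n3' := poch_ne ((2 + c) / 2) (by simpa using half_ne c hc 2) m
  have n4 : ((m.factorial : ℕ) : ℝ) ≠ 0 := by exact_mod_cast m.factorial_ne_zero
  have n7 : c + 2 * m ≠ 0 := fun h => hc (2 * m) (by push_cast; linarith)
  have s1 := poch_shift a m
  have s2 := poch_shift (c / 2) m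
  rw [show 1 + c / 2 = (2 + c) / 2 by ring] at s2
  have s3 : poch ((2 + c) / 2) m = poch (c / 2) m * (c + 2 * m) / c := by
    field_simp
    linear_combination 2 * s2
  rw [s3]
  have e : coeff (2 * m + 1) (Q a c) = 2 * (poch a m * (a + m)) / (c + 2 * m) *
      (poch (c - a) m * (1 / 4) ^ m /
      (poch c m * poch (c / 2) m * poch ((1 + c) / 2) m * m.factorial)) := by
    rw [div_mul_eq_mul_div, eq_div_iff n7]
    push_cast at h2
    linear_combination h2
  rw [e, ← s1]
  field_simp

lemma fc_step (a c : ℝ) (hc : ∀ m : ℕ, c ≠ -(m : ℝ)) (y : ℝ) (k : ℕ) :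
    fc a c (k + 1) * y ^ (k + 1) =
      ((a + 1 * (k : ℝ)) / (c + 1 * k) * (y * (1 / ((k : ℝ) + 1)))) * (fc a c k * y ^ k) := by
  have n6 : c + k ≠ 0 := fun h => hc k (by linarith)
  have n5 : (k : ℝ) + 1 ≠ 0 := by positivity
  have h := fc_succ a c hc k
  have : fc a c (k + 1) = (a + k) * fc a c k / ((k + 1) * (c + k)) := by
    rw [eq_div_iff (by positivity)]
    linear_combination h
  rw [this, one_mul, pow_succ]
  field_simp

lemma summ (a c : ℝ) (hc : ∀ m : ℕ, c ≠ -(m : ℝ)) (y : ℝ) :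
    Summable fun k => ‖fc a c k * y ^ k‖ := by
  have t0 := tendsto_add_mul_div_add_mul_atTop_nhds (𝕜 := ℝ) a c 1 one_ne_zero
  have t0' := (tendsto_one_div_add_atTop_nhds_zero_nat (𝕜 := ℝ)).const_mul y
  have t2 := (t0.mul t0').norm
  simp only [mul_zero, norm_zero] at t2
  have t3 := t2.eventually_le_const (show (0 : ℝ) < 1 / 2 by norm_num)
  apply Summable.norm
  have hlt : (1 / 2 : ℝ) < 1 := by norm_num
  apply summable_of_ratio_norm_eventually_le hlt
  filter_upwards [t3] with k hk
  rw [fc_step a c hc, norm_mul]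
  exact mul_le_mul_of_nonneg_right hk (norm_nonneg _)

lemma summ' (a c : ℝ) (hc : ∀ m : ℕ, c ≠ -(m : ℝ)) (y l : ℝ) :
    Summable fun k : ℕ => ‖(1 + k / l) * fc a c k * y ^ k‖ := by
  refine Summable.of_nonneg_of_le (fun _ => norm_nonneg _) (fun k => ?_)
    ((summ a c hc y).add ((summ a c hc (2 * y)).mul_left ‖l⁻¹‖))
  have e : (1 + k / l) * fc a c k * y ^ k =
    fc a c k * y ^ k + l⁻¹ * (k * (fc a c k * y ^ k)) := by ring
  rw [e]
  refine (norm_add_le _ _).trans (add_le_add le_rfl ?_)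
  rw [norm_mul]
  refine mul_le_mul_of_nonneg_left ?_ (norm_nonneg _)
  rw [show fc a c k * (2 * y) ^ k = 2 ^ k * (fc a c k * y ^ k) by rw [mul_pow]; ring,
    norm_mul, norm_mul (2 ^ k : ℝ)]
  refine mul_le_mul_of_nonneg_right ?_ (norm_nonneg _)
  have : (k : ℝ) ≤ 2 ^ k := by exact_mod_cast Nat.lt_two_pow_self.le
  rw [Real.norm_of_nonneg (by positivity), Real.norm_of_nonneg (by positivity)]
  exact this

lemma poch_ratio (l : ℝ) (hl : ∀ m : ℕ, l ≠ -(m : ℝ)) (k : ℕ) :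
    poch (1 + l) k = (1 + k / l) * poch l k := by
  have n0 : l ≠ 0 := by simpa using hl 0
  have := poch_shift l k
  field_simp
  linear_combination this

lemma conv (a c l x : ℝ) (n : ℕ) :
    ∑ kl ∈ Finset.HasAntidiagonal.antidiagonal n, (fc a c kl.1 * x ^ kl.1) *
      ((1 + kl.2 / l) * fc a c kl.2 * (-x) ^ kl.2) =
    ((1 + n / (2 * l)) * coeff n (P a c) - coeff n (Q a c) / (2 * l)) * x ^ n := by
  have h1 : U a c * (V a c + C l⁻¹ * th (V a c)) =
      P a c + C ((2 * l)⁻¹) * (th (P a c) - Q a c) := by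
    have e : (C l⁻¹ : PowerSeries ℝ) = C ((2 * l)⁻¹) * 2 := by
      rw [← map_ofNat (C : ℝ →+* PowerSeries ℝ) 2, ← map_mul]
      congr 1
      rw [mul_inv]
      ring
    simp only [P, Q, th_mul, e]
    ring
  have h2 := congrArg (coeff n) h1
  rw [coeff_mul] at h2
  simp only [map_sub, map_add, coeff_C_mul, coeff_th, coeff_U, coeff_V] at h2
  rw [show (1 + n / (2 * l)) * coeff n (P a c) - coeff n (Q a c) / (2 * l) =
    coeff n (P a c) + (2 * l)⁻¹ * (n * coeff n (P a c) - coeff n (Q a c)) by ring, ← h2,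
    Finset.sum_mul]
  refine Finset.sum_congr rfl fun kl hkl => ?_
  rw [← Finset.HasAntidiagonal.mem_antidiagonal.1 hkl, pow_add, neg_pow x]
  ring

lemma split_even_odd (w : ℕ → ℝ) (s3 : Summable w) :
    ∑' n, w n = (∑' k, w (2 * k)) + ∑' k, w (2 * k + 1) := by
  have i1 : Function.Injective (fun k : ℕ => 2 * k) := fun i j h => by
    simp only at h
    omega
  have i2 : Function.Injective (fun k : ℕ => 2 * k + 1) := fun i j h => by
    simp only at h
    omega
  exact (tsum_even_add_odd (f := w) (s3.comp_injective i1) (s3.comp_injective i2)).symm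

lemma cauchy (f g w : ℕ → ℝ) (s1 : Summable fun k => ‖f k‖) (s2 : Summable fun k => ‖g k‖)
    (h : ∀ n, ∑ kl ∈ Finset.HasAntidiagonal.antidiagonal n, f kl.1 * g kl.2 = w n) :
    (∑' k, f k) * (∑' k, g k) = (∑' k, w (2 * k)) + ∑' k, w (2 * k + 1) := by
  have s3 := summable_norm_sum_mul_antidiagonal_of_summable_norm s1 s2
  rw [tsum_mul_tsum_eq_tsum_sum_antidiagonal_of_summable_norm s1 s2]
  simp only [h] at s3 ⊢
  exact split_even_odd w (Summable.of_norm s3)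

end Aux5

open Aux5 in
/-- Lemma 4 (product formula for `₁F₁` and `₂F₂` series): an extension of
Bailey's product formula with an extra linear factor. -/
theorem stmt_5 (a c lam : ℝ)
    (hlam : ∀ m : ℕ, lam ≠ -(m : ℝ))
    (hc : ∀ m : ℕ, c ≠ -(m : ℝ)) (x : ℝ) :
    (∑' k : ℕ, poch a k * x ^ k / (poch c k * k.factorial)) *
      (∑' k : ℕ, poch (1 + lam) k * poch a k * (-x) ^ k /
        (poch lam k * poch c k * k.factorial))
    = (∑' k : ℕ, poch (1 + lam) k * poch a k * poch (c - a) k * (x ^ 2 / 4) ^ k /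
        (poch lam k * poch c k * poch (c / 2) k * poch ((1 + c) / 2) k * k.factorial))
      - (a * x / (c * lam)) *
        (∑' k : ℕ, poch (1 + a) k * poch (c - a) k * (x ^ 2 / 4) ^ k /
          (poch c k * poch ((1 + c) / 2) k * poch ((2 + c) / 2) k * k.factorial)) := by
  have n0 : lam ≠ 0 := by simpa using hlam 0
  have c0 : c ≠ 0 := by simpa using hc 0
  have e1 : ∀ k : ℕ, poch a k * x ^ k / (poch c k * k.factorial) = fc a c k * x ^ k := by
    intro k
    rw [fc]
    ring
  have e2 : ∀ k : ℕ, poch (1 + lam) k * poch a k * (-x) ^ k /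
        (poch lam k * poch c k * k.factorial) = (1 + k / lam) * fc a c k * (-x) ^ k := by
    intro k
    have := poch_ne lam hlam k
    rw [fc, poch_ratio lam hlam, mul_assoc (poch lam k) (poch c k),
      show (1 + k / lam) * poch lam k * poch a k * (-x) ^ k =
        poch lam k * ((1 + k / lam) * poch a k * (-x) ^ k) by ring, mul_div_mul_left _ _ this]
    ring
  simp only [e1, e2]
  have s1 := summ a c hc x
  have s2 := summ' a c hc (-x) lam
  rw [cauchy _ _ _ s1 s2 (conv a c lam x),
    sub_eq_add_neg, ← neg_mul, ← tsum_mul_left]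
  congr 1
  · refine tsum_congr fun k => ?_
    have := poch_ne lam hlam k
    rw [Q_even a c hc, P_even a c hc, poch_ratio lam hlam, pow_mul,
      show x ^ 2 / 4 = 1 / 4 * x ^ 2 by ring, mul_pow]
    simp only [mul_assoc (poch lam k)]
    rw [show ∀ A B D E : ℝ, (1 + k / lam) * poch lam k * A * B * (D * E) =
        poch lam k * ((1 + k / lam) * A * B * (D * E)) from fun _ _ _ _ => by ring,
        mul_div_mul_left _ _ this]
    push_cast
    rw [mul_div_mul_left _ _ (two_ne_zero)]
    ring
  · refine tsum_congr fun k => ?_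
    rw [Q_odd a c hc, P_odd, pow_succ, pow_mul, show x ^ 2 / 4 = 1 / 4 * x ^ 2 by ring, mul_pow]
    field_simp
    ring
end

section
/- Let a, c, e, λ be real numbers with λ ≠ 0, with a/2 − c − e > 0, such that 1+a−c, 1+a−e and λ are not zero or negative integers, and such that none of the arguments a, 1+a−c−e, (1+a)/2, (1+a)/2−c−e, (1+a)/2−c, (1+a)/2−e, a/2, (2+a)/2−c−e, (2+a)/2−c, (2+a)/2−e of the Gamma function below is zero or a negative integer. Then the convergent series ∑_{k=0}^{∞} (a)_k (c)_k (e)_k (1+λ)_k / ((1+a−c)_k (1+a−e)_k (λ)_k · k!) equals [Γ(1+a−c)Γ(1+a−e)/(Γ(a)Γ(1+a−c−e))] · { (1/(2λ)) · Γ((1+a)/2)Γ((1+a)/2−c−e)/(Γ((1+a)/2−c)Γ((1+a)/2−e)) + ((2λ−a)/(4λ)) · Γ(a/2)Γ((2+a)/2−c−e)/(Γ((2+a)/2−c)Γ((2+a)/2−e)) }. -/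
/-- `x` is neither zero nor a negative integer. -/
def NotNonposInt (x : ℝ) : Prop := ∀ m : ℕ, x ≠ -(m : ℝ)

open Filter Topology

lemma poch_succ (x : ℝ) (n : ℕ) : poch x (n+1) = poch x n * (x + n) := by
  simp [poch, Finset.prod_range_succ]

lemma poch_ne {x : ℝ} (h : NotNonposInt x) (n : ℕ) : poch x n ≠ 0 := by
  unfold poch
  rw [Finset.prod_ne_zero_iff]
  intro i _ h0
  exact h i (by linarith)

lemma nn_ne {x : ℝ} (h : NotNonposInt x) (n : ℕ) : x + n ≠ 0 := fun h0 => h n (by linarith)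

lemma nn_add {x y : ℝ} (h : NotNonposInt x) (n : ℕ) (hy : y = x + n) : NotNonposInt y := by
  intro m hm
  exact h (m + n) (by push_cast; linarith)

lemma nn_pos {x : ℝ} (h : 0 < x) : NotNonposInt x := by
  intro m hm
  have : (0:ℝ) ≤ m := m.cast_nonneg
  linarith

lemma poch_asymp (x : ℝ) :
    Tendsto (fun n : ℕ => poch x (n+1) / ((n:ℝ)^x * n.factorial)) atTop (𝓝 (1 / Real.Gamma x)) := by
  have e : (fun n : ℕ => poch x (n+1) / ((n:ℝ)^x * n.factorial)) = fun n => (Real.GammaSeq x n)⁻¹ := by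
    funext n
    rw [Real.GammaSeq, inv_div, poch]
  by_cases h : NotNonposInt x
  · rw [e, one_div]
    exact (Real.GammaSeq_tendsto_Gamma x).inv₀ (Real.Gamma_ne_zero h)
  · simp only [NotNonposInt, not_forall, not_not] at h
    obtain ⟨m, hm⟩ := h
    rw [hm, Real.Gamma_neg_nat_eq_zero]
    simp only [div_zero]
    apply tendsto_const_nhds.congr'
    filter_upwards [eventually_ge_atTop m] with n hn
    have : poch (-(m:ℝ)) (n+1) = 0 := by
      unfold poch
      apply Finset.prod_eq_zero (i := m) (by simp; omega) (by ring)
    rw [this, zero_div]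

lemma Gamma_poch {x : ℝ} (h : NotNonposInt x) (n : ℕ) :
    Real.Gamma (x + n) = poch x n * Real.Gamma x := by
  induction n with
  | zero => simp [poch]
  | succ n ih =>
    rw [poch_succ]
    push_cast
    rw [← add_assoc, Real.Gamma_add_one (nn_ne h n), ih]; ring

lemma Gamma_asymp {x : ℝ} (h : NotNonposInt x) :
    Tendsto (fun n : ℕ => Real.Gamma (x + n + 1) / ((n:ℝ)^x * n.factorial)) atTop (𝓝 1) := by
  have := (poch_asymp x).mul_const (Real.Gamma x)
  rw [one_div, inv_mul_cancel₀ (Real.Gamma_ne_zero h)] at this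
  refine this.congr fun n => ?_
  have := Gamma_poch h (n+1)
  push_cast at this
  rw [add_assoc, this]; ring

lemma Gamma_quot {x y z w : ℝ} (hx : NotNonposInt x) (hy : NotNonposInt y) (hz : NotNonposInt z)
    (hw : NotNonposInt w) (hs : x + y = z + w) :
    Tendsto (fun n : ℕ => Real.Gamma (x + n + 1) * Real.Gamma (y + n + 1) /
      (Real.Gamma (z + n + 1) * Real.Gamma (w + n + 1))) atTop (𝓝 1) := by
  have := ((Gamma_asymp hx).mul (Gamma_asymp hy)).div ((Gamma_asymp hz).mul (Gamma_asymp hw)) (by simp)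
  simp only [mul_one, div_one] at this
  refine this.congr' ?_
  filter_upwards [eventually_gt_atTop 0] with n hn
  have hn' : (0:ℝ) < n := by exact_mod_cast hn
  have e : (n:ℝ)^x * (n:ℝ)^y = (n:ℝ)^z * (n:ℝ)^w := by
    rw [← Real.rpow_add hn', ← Real.rpow_add hn', hs]
  have hf : (n.factorial : ℝ) ≠ 0 := by positivity
  have p1 := (Real.rpow_pos_of_pos hn' x).ne'
  have p2 := (Real.rpow_pos_of_pos hn' y).ne'
  have p3 := (Real.rpow_pos_of_pos hn' z).ne'
  have p4 := (Real.rpow_pos_of_pos hn' w).ne'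
  simp only [Pi.div_apply]
  rw [div_mul_div_comm, div_mul_div_comm, div_div_div_eq]
  have e2 : ((n:ℝ)^x * n.factorial * ((n:ℝ)^y * n.factorial)) = ((n:ℝ)^z * n.factorial * ((n:ℝ)^w * n.factorial)) := by
    linear_combination (n.factorial:ℝ)^2 * e
  rw [e2, mul_comm (((n:ℝ)^z * n.factorial * ((n:ℝ)^w * n.factorial)))]
  rw [mul_div_mul_right _ _ (by positivity)]

/-- general term -/
noncomputable def tt (x y z u v : ℝ) (k : ℕ) : ℝ :=
  poch x k * poch y k * poch z k / (poch u k * poch v k * k.factorial)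

lemma tt_asymp (x y z u v : ℝ) (hu : NotNonposInt u) (hv : NotNonposInt v) :
    (fun n : ℕ => tt x y z u v (n+1)) =O[atTop] (fun n : ℕ => (n:ℝ)^(x+y+z-u-v-1)) := by
  have hu' : 1 / Real.Gamma u ≠ 0 := one_div_ne_zero (Real.Gamma_ne_zero hu)
  have hv' : 1 / Real.Gamma v ≠ 0 := one_div_ne_zero (Real.Gamma_ne_zero hv)
  have h := (((poch_asymp x).mul (poch_asymp y)).mul (poch_asymp z)).div
    ((poch_asymp u).mul (poch_asymp v)) (mul_ne_zero hu' hv')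
  have hO := h.isBigO_one ℝ
  have h2 : (fun n : ℕ => (n:ℝ)^(x+y+z-u-v) / ((n:ℝ)+1)) =O[atTop]
      (fun n : ℕ => (n:ℝ)^(x+y+z-u-v-1)) := by
    apply Asymptotics.IsBigO.of_bound 1
    filter_upwards [eventually_gt_atTop 0] with n hn
    have hn' : (0:ℝ) < n := by exact_mod_cast hn
    rw [Real.rpow_sub_one hn'.ne', one_mul, Real.norm_of_nonneg (by positivity),
      Real.norm_of_nonneg (by positivity)]
    gcongr
    linarith
  have h3 := hO.mul h2
  simp only [one_mul] at h3
  refine h3.congr' ?_ EventuallyEq.rfl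
  filter_upwards [eventually_gt_atTop 0] with n hn
  have hn' : (0:ℝ) < n := by exact_mod_cast hn
  have hf : (n.factorial : ℝ) ≠ 0 := by positivity
  have p1 := (Real.rpow_pos_of_pos hn' x).ne'
  have p2 := (Real.rpow_pos_of_pos hn' y).ne'
  have p3 := (Real.rpow_pos_of_pos hn' z).ne'
  have p4 := (Real.rpow_pos_of_pos hn' u).ne'
  have p5 := (Real.rpow_pos_of_pos hn' v).ne'
  have q1 := poch_ne hu (n+1)
  have q2 := poch_ne hv (n+1)
  simp only [Pi.div_apply, tt]
  rw [Nat.factorial_succ, Real.rpow_sub hn', Real.rpow_sub hn', Real.rpow_add hn', Real.rpow_add hn']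
  push_cast
  field_simp

lemma tt_summable (x y z u v : ℝ) (hu : NotNonposInt u) (hv : NotNonposInt v)
    (h : x+y+z-u-v < 0) : Summable (tt x y z u v) := by
  rw [← summable_nat_add_iff 1]
  exact summable_of_isBigO_nat (Real.summable_nat_rpow.2 (by linarith)) (tt_asymp x y z u v hu hv)

lemma tt_summable_mul (x y z u v : ℝ) (hu : NotNonposInt u) (hv : NotNonposInt v)
    (h : x+y+z-u-v < -1) : Summable (fun k : ℕ => (k:ℝ) * tt x y z u v k) := by
  rw [← summable_nat_add_iff 1]
  refine summable_of_isBigO_nat (g := fun n : ℕ => (n:ℝ)^(x+y+z-u-v)) (Real.summable_nat_rpow.2 (by linarith)) ?_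
  have h2 : (fun n : ℕ => ((n+1:ℕ):ℝ)) =O[atTop] (fun n : ℕ => (n:ℝ)) := by
    apply Asymptotics.IsBigO.of_bound 2
    filter_upwards [eventually_gt_atTop 0] with n hn
    have hn' : (1:ℝ) ≤ n := by exact_mod_cast hn
    rw [Real.norm_of_nonneg (by positivity), Real.norm_of_nonneg (by positivity)]
    push_cast; linarith
  refine (h2.mul (tt_asymp x y z u v hu hv)).congr' EventuallyEq.rfl ?_
  filter_upwards [eventually_gt_atTop 0] with n hn
  have hn' : (0:ℝ) < n := by exact_mod_cast hn
  rw [Real.rpow_sub_one hn'.ne']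
  field_simp

lemma tt_tendsto (x y z u v : ℝ) (hu : NotNonposInt u) (hv : NotNonposInt v)
    (h : x+y+z-u-v < -1) (p q : ℝ) :
    Tendsto (fun k : ℕ => (k:ℝ) * (p * k + q) * tt x y z u v k) atTop (𝓝 0) := by
  rw [← tendsto_add_atTop_iff_nat 1]
  have h2 : (fun n : ℕ => ((n+1:ℕ):ℝ) * (p * ((n+1:ℕ):ℝ) + q)) =O[atTop] (fun n : ℕ => (n:ℝ)^2) := by
    apply Asymptotics.IsBigO.of_bound (2 * (2*|p| + |q|))
    filter_upwards [eventually_gt_atTop 0] with n hn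
    have hn' : (1:ℝ) ≤ n := by exact_mod_cast hn
    rw [norm_mul, Real.norm_of_nonneg (by positivity : (0:ℝ) ≤ ((n+1:ℕ):ℝ)),
      Real.norm_of_nonneg (by positivity : (0:ℝ) ≤ (n:ℝ)^2)]
    have : ‖p * ((n+1:ℕ):ℝ) + q‖ ≤ (2*|p| + |q|) * n := by
      refine (norm_add_le _ _).trans ?_
      rw [norm_mul, Real.norm_of_nonneg (by positivity : (0:ℝ) ≤ ((n+1:ℕ):ℝ))]
      push_cast
      simp only [Real.norm_eq_abs]
      nlinarith [abs_nonneg p, abs_nonneg q]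
    have h1 : ((n+1:ℕ):ℝ) ≤ 2 * n := by push_cast; linarith
    calc _ ≤ (2 * n) * ((2*|p| + |q|) * n) := by gcongr
      _ = _ := by ring
  have h3 := h2.mul (tt_asymp x y z u v hu hv)
  refine h3.trans_tendsto ?_
  have h4 : Tendsto (fun n : ℕ => (n:ℝ)^(-(-(x+y+z-u-v+1)))) atTop (𝓝 0) :=
    (tendsto_rpow_neg_atTop (by linarith)).comp tendsto_natCast_atTop_atTop
  refine h4.congr' ?_
  filter_upwards [eventually_gt_atTop 0] with n hn
  have hn' : (0:ℝ) < n := by exact_mod_cast hn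
  rw [neg_neg, Real.rpow_sub_one hn'.ne', Real.rpow_add_one hn'.ne']
  field_simp

/-- Dixon term -/
noncomputable def sd (a c e : ℝ) (k : ℕ) : ℝ := tt a c e (1+a-c) (1+a-e) k

lemma sd_succ {a c e : ℝ} (h1 : NotNonposInt (1+a-c)) (h2 : NotNonposInt (1+a-e)) (k : ℕ) :
    sd a c e (k+1) = sd a c e k * ((a+k)*(c+k)*(e+k)/((1+a-c+k)*(1+a-e+k)*(k+1))) := by
  simp only [sd, tt, poch_succ, Nat.factorial_succ]
  push_cast
  have q1 := poch_ne h1 k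
  have q2 := poch_ne h2 k
  have q3 := nn_ne h1 k
  have q4 := nn_ne h2 k
  have : (k:ℝ)+1 ≠ 0 := by positivity
  have hf : (k.factorial : ℝ) ≠ 0 := by positivity
  field_simp

lemma poch_shift {x : ℝ} (k : ℕ) : poch (x+1) k * x = poch x k * (x + k) := by
  induction k with
  | zero => simp [poch]
  | succ n ih =>
    rw [poch_succ, poch_succ]
    push_cast
    linear_combination (x+1+n) * ih

lemma sd_shift {a c e : ℝ} (h0 : NotNonposInt a)
    (h1 : NotNonposInt (1+a-c)) (h2 : NotNonposInt (1+a-e)) (k : ℕ) :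
    sd (a+1) c e k = sd a c e k * ((a+k)/a * ((1+a-c)/(1+a-c+k)) * ((1+a-e)/(1+a-e+k))) := by
  simp only [sd, tt]
  have a0 := nn_ne h0 0
  have a1 := nn_ne h1 0
  have a2 := nn_ne h2 0
  simp only [Nat.cast_zero, add_zero] at a0 a1 a2
  rw [show 1 + (a+1) - c = (1+a-c)+1 by ring, show 1 + (a+1) - e = (1+a-e)+1 by ring]
  rw [eq_div_of_mul_eq a0 (poch_shift (x := a) k), eq_div_of_mul_eq a1 (poch_shift (x := 1+a-c) k),
    eq_div_of_mul_eq a2 (poch_shift (x := 1+a-e) k)]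
  have q1 := poch_ne h1 k
  have q2 := poch_ne h2 k
  have q3 := nn_ne h1 k
  have q4 := nn_ne h2 k
  have hf : (k.factorial : ℝ) ≠ 0 := by positivity
  field_simp

lemma telescope {f G : ℕ → ℝ} (hf : Summable f) (h : ∀ k, f k = G (k+1) - G k) (h0 : G 0 = 0)
    (hG : Tendsto G atTop (𝓝 0)) : ∑' k, f k = 0 := by
  have h1 := hf.hasSum.tendsto_sum_nat
  refine tendsto_nhds_unique h1 (hG.congr fun n => ?_)
  simp only [h]
  rw [Finset.sum_range_sub, h0, sub_zero]

/-- Sums -/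
noncomputable def S0 (a c e : ℝ) : ℝ := ∑' k, sd a c e k
noncomputable def S1 (a c e : ℝ) : ℝ := ∑' k : ℕ, (k:ℝ) * sd a c e k

lemma sd_sum {a c e : ℝ} (hc : 0 < a / 2 - c - e)
    (h1 : NotNonposInt (1+a-c)) (h2 : NotNonposInt (1+a-e)) : Summable (sd a c e) :=
  tt_summable _ _ _ _ _ h1 h2 (by linarith)

lemma sd_sum1 {a c e : ℝ} (hc : 0 < a / 2 - c - e)
    (h1 : NotNonposInt (1+a-c)) (h2 : NotNonposInt (1+a-e)) :
    Summable (fun k : ℕ => (k:ℝ) * sd a c e k) :=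
  tt_summable_mul _ _ _ _ _ h1 h2 (by linarith)

lemma rec1 {a c e : ℝ} (hc : 0 < a / 2 - c - e) (h0 : NotNonposInt a)
    (h1 : NotNonposInt (1+a-c)) (h2 : NotNonposInt (1+a-e)) :
    S0 a c e + 2 / a * S1 a c e = (1+a-c-e)*(1+a-2*c)*(1+a-2*e)/((1+a-c)*(1+a-e)*(1+a-2*c-2*e))
      * S0 (a+1) c e := by
  set r := (1+a-c-e)*(1+a-2*c)*(1+a-2*e)/((1+a-c)*(1+a-e)*(1+a-2*c-2*e)) with hr
  have s0 := sd_sum hc h1 h2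
  have s1 := sd_sum1 hc h1 h2
  have s2 := sd_sum (a := a+1) (c := c) (e := e) (by linarith)
    (nn_add h1 1 (by push_cast; ring)) (nn_add h2 1 (by push_cast; ring))
  have hs := ((s0.add (s1.mul_left (2/a))).sub (s2.mul_left r))
  have key := telescope (G := fun k : ℕ => (k:ℝ) * ((-(2/a)/(1+a-2*c-2*e)) * k +
      ((-(2/a)/(1+a-2*c-2*e)) * a - 1/a)) * sd a c e k) hs ?_ (by simp)
      (tt_tendsto _ _ _ _ _ h1 h2 (by linarith) _ _)
  · rw [Summable.tsum_sub (s0.add (s1.mul_left (2/a))) (s2.mul_left r),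
      Summable.tsum_add s0 (s1.mul_left (2/a)), tsum_mul_left, tsum_mul_left] at key
    simp only [S0, S1]
    linarith
  · intro k
    rw [sd_succ h1 h2, sd_shift h0 h1 h2, hr]
    have a0 := nn_ne h0 0
    have a1 := nn_ne h1 0
    have a2 := nn_ne h2 0
    simp only [Nat.cast_zero, add_zero] at a0 a1 a2
    have q3 := nn_ne h1 k
    have q4 := nn_ne h2 k
    have q5 : 1+a-2*c-2*e ≠ 0 := by intro h; linarith
    have : (k:ℝ)+1 ≠ 0 := by positivity
    push_cast
    field_simp
    ring

lemma rec2 {a c e : ℝ} (hc : 0 < a / 2 - c - e) (h0 : NotNonposInt a)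
    (h1 : NotNonposInt (1+a-c)) (h2 : NotNonposInt (1+a-e)) :
    S0 a c e = (1+a)*(1+a-c-e)/((1+a-c)*(1+a-e))
      * (S0 (a+1) c e + 2 / (a+1) * S1 (a+1) c e) := by
  set r := (1+a)*(1+a-c-e)/((1+a-c)*(1+a-e)) with hr
  have k1 : NotNonposInt (1+(a+1)-c) := (nn_add h1 1 (by push_cast; ring))
  have k2 : NotNonposInt (1+(a+1)-e) := (nn_add h2 1 (by push_cast; ring))
  have s0 := sd_sum hc h1 h2
  have s1 := sd_sum1 (a := a+1) (c := c) (e := e) (by linarith) k1 k2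
  have s2 := sd_sum (a := a+1) (c := c) (e := e) (by linarith) k1 k2
  have hs := (s0.sub ((s2.add (s1.mul_left (2/(a+1)))).mul_left r))
  have key := telescope (G := fun k : ℕ => (k:ℝ) * (0 * k + 1/a) * sd a c e k) hs ?_ (by simp)
      (tt_tendsto _ _ _ _ _ h1 h2 (by linarith) _ _)
  · rw [Summable.tsum_sub s0 ((s2.add (s1.mul_left (2/(a+1)))).mul_left r), tsum_mul_left,
      Summable.tsum_add s2 (s1.mul_left (2/(a+1))), tsum_mul_left] at key
    simp only [S0, S1]
    linarith
  · intro k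
    rw [sd_succ h1 h2, sd_shift h0 h1 h2, hr]
    have a0 := nn_ne h0 0
    have a3 := nn_ne h0 1
    have a1 := nn_ne h1 0
    have a2 := nn_ne h2 0
    simp only [Nat.cast_zero, Nat.cast_one, add_zero] at a0 a1 a2 a3
    have q3 := nn_ne h1 k
    have q4 := nn_ne h2 k
    have : (k:ℝ)+1 ≠ 0 := by positivity
    push_cast
    field_simp
    ring

/-- closed form -/
noncomputable def DD (a c e : ℝ) : ℝ :=
  (Real.Gamma (1+a/2) * Real.Gamma (1+a/2-c-e) / (Real.Gamma (1+a/2-c) * Real.Gamma (1+a/2-e))) *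
  (Real.Gamma (1+a-c) * Real.Gamma (1+a-e) / (Real.Gamma (1+a) * Real.Gamma (1+a-c-e)))

structure Good (a c e : ℝ) : Prop where
  hc : 0 < a / 2 - c - e
  h1 : NotNonposInt (1+a-c)
  h2 : NotNonposInt (1+a-e)
  g1 : NotNonposInt a
  g2 : NotNonposInt (1 + a - c - e)
  g7 : NotNonposInt (a / 2)
  g8 : NotNonposInt (1+a/2 - c - e)
  g9 : NotNonposInt (1+a/2 - c)
  g10 : NotNonposInt (1+a/2 - e)

lemma Good.next {a c e : ℝ} (h : Good a c e) (n : ℕ) : Good (a+2*n) c e where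
  hc := by have := h.hc; have : (0:ℝ) ≤ n := n.cast_nonneg; linarith
  h1 := nn_add h.h1 (2*n) (by push_cast; ring)
  h2 := nn_add h.h2 (2*n) (by push_cast; ring)
  g1 := nn_add h.g1 (2*n) (by push_cast; ring)
  g2 := nn_add h.g2 (2*n) (by push_cast; ring)
  g7 := nn_add h.g7 n (by push_cast; ring)
  g8 := nn_add h.g8 n (by push_cast; ring)
  g9 := nn_add h.g9 n (by push_cast; ring)
  g10 := nn_add h.g10 n (by push_cast; ring)

lemma Gamma_succ' {x y : ℝ} (h : NotNonposInt x) (hy : y = x + 1) :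
    Real.Gamma y = x * Real.Gamma x := by
  rw [hy, Real.Gamma_add_one]
  simpa using nn_ne h 0

lemma nn_ne0 {x : ℝ} (h : NotNonposInt x) : x ≠ 0 := by simpa using nn_ne h 0

lemma DD_rec {a c e : ℝ} (h : Good a c e) :
    S0 a c e * DD (a+2) c e = DD a c e * S0 (a+2) c e := by
  obtain ⟨hc, h1, h2, g1, g2, g7, g8, g9, g10⟩ := h
  have k0 : NotNonposInt (1+a) := nn_add g1 1 (by push_cast; ring)
  have k0' : NotNonposInt (a+1) := nn_add g1 1 (by push_cast; ring)
  have k1 : NotNonposInt (1+(a+1)-c) := (nn_add h1 1 (by push_cast; ring))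
  have k2 : NotNonposInt (1+(a+1)-e) := (nn_add h2 1 (by push_cast; ring))
  have k3 : NotNonposInt (1+(a+1)-c-e) := (nn_add g2 1 (by push_cast; ring))
  have k4 : NotNonposInt (1+(a+1)) := (nn_add g1 2 (by push_cast; ring))
  have k7 : NotNonposInt (1+a/2) := (nn_add g7 1 (by push_cast; ring))
  rw [rec2 hc g1 h1 h2, rec1 (by linarith) k0' k1 k2, show a+1+1 = a+2 by ring]
  unfold DD
  rw [Gamma_succ' (x := 1+a/2) (y := 1+(a+2)/2) k7 (by ring),
    Gamma_succ' (x := 1+a/2-c-e) (y := 1+(a+2)/2-c-e) g8 (by ring),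
    Gamma_succ' (x := 1+a/2-c) (y := 1+(a+2)/2-c) g9 (by ring),
    Gamma_succ' (x := 1+a/2-e) (y := 1+(a+2)/2-e) g10 (by ring),
    Gamma_succ' (x := 1+(a+1)-c) (y := 1+(a+2)-c) k1 (by ring),
    Gamma_succ' (x := 1+(a+1)-e) (y := 1+(a+2)-e) k2 (by ring),
    Gamma_succ' (x := 1+(a+1)) (y := 1+(a+2)) k4 (by ring),
    Gamma_succ' (x := 1+(a+1)-c-e) (y := 1+(a+2)-c-e) k3 (by ring),
    Gamma_succ' (x := 1+a-c) (y := 1+(a+1)-c) h1 (by ring),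
    Gamma_succ' (x := 1+a-e) (y := 1+(a+1)-e) h2 (by ring),
    Gamma_succ' (x := 1+a) (y := 1+(a+1)) k0 (by ring),
    Gamma_succ' (x := 1+a-c-e) (y := 1+(a+1)-c-e) g2 (by ring)]
  have n1 := nn_ne0 k0
  have n2 := nn_ne0 k1
  have n3 := nn_ne0 k2
  have n4 := nn_ne0 k3
  have n5 := nn_ne0 k4
  have n6 := nn_ne0 k7
  have n7 := nn_ne0 h1
  have n8 := nn_ne0 h2
  have n9 := nn_ne0 g2
  have n10 := nn_ne0 g8
  have n11 := nn_ne0 g9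
  have n12 := nn_ne0 g10
  have m1 := Real.Gamma_ne_zero k0
  have m2 := Real.Gamma_ne_zero g2
  have m3 := Real.Gamma_ne_zero g9
  have m4 := Real.Gamma_ne_zero g10
  rw [show 1 + (a+1) - 2*c-2*e = 2*(1+a/2-c-e) by ring,
    show 1 + (a+1) - 2*c = 2*(1+a/2-c) by ring, show 1 + (a+1) - 2*e = 2*(1+a/2-e) by ring]
  rw [show 1+(a+1) = 2*(1+a/2) by ring] at n2 n3 n4 n5 ⊢
  clear k1 k2 k3 k4
  generalize Real.Gamma (1+a/2) = G1
  generalize Real.Gamma (1+a/2-c-e) = G2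
  generalize Real.Gamma (1+a/2-c) = G3 at *
  generalize Real.Gamma (1+a/2-e) = G4 at *
  generalize Real.Gamma (1+a-c) = G5
  generalize Real.Gamma (1+a-e) = G6
  generalize Real.Gamma (1+a) = G7 at *
  generalize Real.Gamma (1+a-c-e) = G8 at *
  generalize 1+a/2-c-e = X2 at *
  generalize 1+a/2-c = X3 at *
  generalize 1+a/2-e = X4 at *
  generalize 2*(1+a/2)-c-e = Y1 at *
  generalize 2*(1+a/2)-c = Y2 at *
  generalize 2*(1+a/2)-e = Y3 at *
  generalize 1+a/2 = X1 at *
  generalize 1+a-c-e = Z1 at *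
  generalize 1+a-c = Z2 at *
  generalize 1+a-e = Z3 at *
  generalize 1+a = Z4 at *
  field_simp

lemma DD_iter {a c e : ℝ} (h : Good a c e) (n : ℕ) :
    S0 a c e * DD (a+2*n) c e = DD a c e * S0 (a+2*n) c e := by
  induction n with
  | zero => simp [mul_comm]
  | succ n ih =>
    have hn := h.next n
    have := DD_rec hn
    push_cast
    rw [show a + 2*((n:ℝ)+1) = a+2*n+2 by ring]
    have hD : DD (a+2*n) c e ≠ 0 := by
      unfold DD
      have k0 : NotNonposInt (1+(a+2*n)) := nn_add hn.g1 1 (by push_cast; ring)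
      have k7 : NotNonposInt (1+(a+2*n)/2) := (nn_add hn.g7 1 (by push_cast; ring))
      have m1 := Real.Gamma_ne_zero k0
      have m2 := Real.Gamma_ne_zero hn.g2
      have m3 := Real.Gamma_ne_zero hn.g9
      have m4 := Real.Gamma_ne_zero hn.g10
      have m5 := Real.Gamma_ne_zero hn.g8
      have m6 := Real.Gamma_ne_zero k7
      have m7 := Real.Gamma_ne_zero hn.h1
      have m8 := Real.Gamma_ne_zero hn.h2
      positivity
    apply mul_right_cancel₀ hD
    linear_combination DD (a+2*n+2) c e * ih + DD a c e * this

lemma DD_lim {a c e : ℝ} (h : Good a c e) :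
    Tendsto (fun n : ℕ => DD (a+2*(n+1:ℕ)) c e) atTop (𝓝 1) := by
  have k7 : NotNonposInt (1+a/2) := (nn_add h.g7 1 (by push_cast; ring))
  have q1 := Gamma_quot k7 h.g8 h.g9 h.g10 (by ring)
  have q2 := Gamma_quot (x := 2+a-c) (y := 2+a-e) (z := 2+a) (w := 2+a-c-e)
    (nn_add h.h1 1 (by push_cast; ring)) (nn_add h.h2 1 (by push_cast; ring))
    (nn_add h.g1 2 (by push_cast; ring)) (nn_add h.g2 1 (by push_cast; ring)) (by ring)
  have q3 := q2.comp (tendsto_id.const_mul_atTop' (by norm_num : 0 < 2))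
  have := q1.mul q3
  rw [mul_one] at this
  refine this.congr fun n => ?_
  simp only [Function.comp, id, DD]
  push_cast
  congr! 4 <;> ring_nf

lemma poch_abs_le (x : ℝ) (k : ℕ) : |poch x k| ≤ poch |x| k := by
  unfold poch
  rw [Finset.abs_prod]
  apply Finset.prod_le_prod (fun _ _ => abs_nonneg _)
  intro i _
  refine (abs_add_le _ _).trans (by simp)

lemma S0_lim (c e : ℝ) : Tendsto (fun b => S0 b c e) atTop (𝓝 1) := by
  have form : ∀ b k, sd b c e k = poch c k * poch e k / k.factorial *
      ∏ j ∈ Finset.range k, ((b + j) / ((1+b-c+j) * (1+b-e+j))) := by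
    intro b k
    rw [Finset.prod_div_distrib, Finset.prod_mul_distrib]
    simp only [sd, tt, poch]
    rw [div_mul_div_comm]
    ring_nf
  set b0 : ℝ := 2*|c| + 2*|e| + 1 with hb0
  have hc0 := abs_nonneg c
  have he0 := abs_nonneg e
  have hS : Summable (tt b0 |c| |e| (b0 - |c|) (b0 - |e|)) :=
    tt_summable _ _ _ _ _ (nn_pos (by linarith)) (nn_pos (by linarith)) (by linarith)
  have hlim : (1:ℝ) = ∑' k : ℕ, poch c k * poch e k / k.factorial * 0 ^ k := by
    rw [tsum_eq_single 0]
    · simp [poch]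
    · intro k hk; simp [hk]
  rw [hlim]
  apply tendsto_tsum_of_dominated_convergence hS
  · intro k
    simp only [form]
    apply Tendsto.const_mul
    have : ∀ j ∈ Finset.range k, Tendsto (fun b : ℝ => (b + j) / ((1+b-c+j) * (1+b-e+j))) atTop (𝓝 0) := by
      intro j _
      have t1 : Tendsto (fun b : ℝ => (c-1)/(1+b-c+j)) atTop (𝓝 0) := by
        apply Tendsto.const_div_atTop
        have := tendsto_atTop_add_const_right atTop (1-c+j) tendsto_id
        refine this.congr fun b => by simp; ring
      have t2 : Tendsto (fun b : ℝ => 1/(1+b-e+j)) atTop (𝓝 0) := by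
        apply Tendsto.const_div_atTop
        have := tendsto_atTop_add_const_right atTop (1-e+j) tendsto_id
        refine this.congr fun b => by simp; ring
      have t3 := (t1.const_add 1).mul t2
      rw [mul_zero] at t3
      refine t3.congr' ?_
      filter_upwards [eventually_gt_atTop (c-1-j), eventually_gt_atTop (e-1-j)] with b p1 p2
      have : 1+b-c+j ≠ 0 := by intro h; linarith
      have : 1+b-e+j ≠ 0 := by intro h; linarith
      field_simp
      ring
    have := tendsto_finsetProd _ this
    simpa using this
  · filter_upwards [eventually_ge_atTop b0] with b hb k
    rw [form, Real.norm_eq_abs, abs_mul, abs_div, abs_mul]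
    have e1 : tt b0 |c| |e| (b0 - |c|) (b0 - |e|) k = poch |c| k * poch |e| k / k.factorial *
      ∏ j ∈ Finset.range k, ((b0 + j) / ((b0 - |c| +j) * (b0-|e|+j))) := by
      rw [Finset.prod_div_distrib, Finset.prod_mul_distrib]
      simp only [tt, poch]
      rw [div_mul_div_comm]
      ring_nf
    rw [e1, Finset.abs_prod, Nat.abs_cast]
    have hp : ∀ x : ℝ, 0 ≤ poch |x| k := fun x => Finset.prod_nonneg (fun i _ => by positivity)
    have lc := le_abs_self c
    have le := le_abs_self e
    have := hp c
    have := hp e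
    gcongr with j hj
    · exact poch_abs_le c k
    · exact poch_abs_le e k
    · have hj0 : (0:ℝ) ≤ j := j.cast_nonneg
      have u1 : 0 < b0 - |c| + j := by linarith
      have u2 : 0 < b0 - |e| + j := by linarith
      have u3 : 0 < b - |c| + j := by linarith
      have u4 : 0 < 1 + b - c + j := by linarith
      have u5 : 0 < 1 + b - e + j := by linarith
      have u6 : 0 < b + j := by linarith
      rw [abs_of_nonneg (by positivity), ← div_div, ← div_div]
      gcongr ?_ / ?_
      · rw [div_le_div_iff₀ u4 u1]
        nlinarith [mul_nonneg hc0 (sub_nonneg.2 hb)]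
      · linarith

lemma dixon {a c e : ℝ} (h : Good a c e) : S0 a c e = DD a c e := by
  have t1 := (DD_lim h).const_mul (S0 a c e)
  have t2 : Tendsto (fun n : ℕ => S0 (a+2*(n+1:ℕ)) c e) atTop (𝓝 1) := by
    apply (S0_lim c e).comp
    apply tendsto_atTop_add_const_left
    apply Tendsto.const_mul_atTop (by norm_num)
    exact tendsto_natCast_atTop_atTop.comp (tendsto_add_atTop_nat 1)
  have t3 := t2.const_mul (DD a c e)
  rw [mul_one] at t1 t3
  refine tendsto_nhds_unique t1 (t3.congr fun n => ?_)
  rw [DD_iter h]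

/-- Equation (6): evaluation of the nonterminating
`₄F₃(a, c, e, 1+λ; 1+a-c, 1+a-e, λ; 1)` series with an extra linear factor. -/
theorem stmt_8 (a c e lam : ℝ)
    (hlam : lam ≠ 0)
    (hconv : a / 2 - c - e > 0)
    (h1 : NotNonposInt (1 + a - c))
    (h2 : NotNonposInt (1 + a - e))
    (h3 : NotNonposInt lam)
    (g1 : NotNonposInt a)
    (g2 : NotNonposInt (1 + a - c - e))
    (g3 : NotNonposInt ((1 + a) / 2))
    (g4 : NotNonposInt ((1 + a) / 2 - c - e))
    (g5 : NotNonposInt ((1 + a) / 2 - c))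
    (g6 : NotNonposInt ((1 + a) / 2 - e))
    (g7 : NotNonposInt (a / 2))
    (g8 : NotNonposInt ((2 + a) / 2 - c - e))
    (g9 : NotNonposInt ((2 + a) / 2 - c))
    (g10 : NotNonposInt ((2 + a) / 2 - e)) :
    ∑' k : ℕ, poch a k * poch c k * poch e k * poch (1 + lam) k /
        (poch (1 + a - c) k * poch (1 + a - e) k * poch lam k * k.factorial)
      = (Real.Gamma (1 + a - c) * Real.Gamma (1 + a - e) /
          (Real.Gamma a * Real.Gamma (1 + a - c - e)))
        * ((1 / (2 * lam)) *
            (Real.Gamma ((1 + a) / 2) * Real.Gamma ((1 + a) / 2 - c - e) /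
              (Real.Gamma ((1 + a) / 2 - c) * Real.Gamma ((1 + a) / 2 - e)))
          + ((2 * lam - a) / (4 * lam)) *
            (Real.Gamma (a / 2) * Real.Gamma ((2 + a) / 2 - c - e) /
              (Real.Gamma ((2 + a) / 2 - c) * Real.Gamma ((2 + a) / 2 - e)))) := by
  have hL : ∀ k : ℕ, poch a k * poch c k * poch e k * poch (1 + lam) k /
        (poch (1 + a - c) k * poch (1 + a - e) k * poch lam k * k.factorial)
      = sd a c e k + 1 / lam * (k * sd a c e k) := by
    intro k
    have p := poch_shift (x := lam) k
    have q1 := poch_ne h1 k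
    have q2 := poch_ne h2 k
    have q3 := poch_ne h3 k
    have hf : (k.factorial : ℝ) ≠ 0 := by positivity
    rw [add_comm 1 lam, eq_div_of_mul_eq hlam p]
    simp only [sd, tt]
    field_simp
  simp only [hL]
  have s0 := sd_sum hconv h1 h2
  have s1 := sd_sum1 hconv h1 h2
  rw [Summable.tsum_add s0 (s1.mul_left _), tsum_mul_left]
  change S0 a c e + 1 / lam * S1 a c e = _
  have r1 := rec1 hconv g1 h1 h2
  have G0 : Good a c e := ⟨hconv, h1, h2, g1, g2, g7, nn_add g8 0 (by push_cast; ring),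
    nn_add g9 0 (by push_cast; ring), nn_add g10 0 (by push_cast; ring)⟩
  have G1 : Good (a+1) c e := ⟨by linarith, nn_add h1 1 (by push_cast; ring),
    nn_add h2 1 (by push_cast; ring), nn_add g1 1 (by push_cast; ring),
    nn_add g2 1 (by push_cast; ring), nn_add g3 0 (by push_cast; ring),
    nn_add g4 1 (by push_cast; ring), nn_add g5 1 (by push_cast; ring),
    nn_add g6 1 (by push_cast; ring)⟩
  have a0 := nn_ne0 g1
  rw [dixon G1] at r1
  have d0 := dixon G0
  have hS1 : S1 a c e = a / 2 * ((S0 a c e + 2 / a * S1 a c e) - S0 a c e) := by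
    field_simp; ring
  rw [hS1, r1, d0]
  have k0 : NotNonposInt (1+a) := nn_add g1 1 (by push_cast; ring)
  unfold DD
  rw [Gamma_succ' (x := a/2) (y := 1+a/2) g7 (by ring),
    Gamma_succ' (x := (1+a)/2) (y := 1+(a+1)/2) g3 (by ring),
    Gamma_succ' (x := (1+a)/2-c-e) (y := 1+(a+1)/2-c-e) g4 (by ring),
    Gamma_succ' (x := (1+a)/2-c) (y := 1+(a+1)/2-c) g5 (by ring),
    Gamma_succ' (x := (1+a)/2-e) (y := 1+(a+1)/2-e) g6 (by ring),
    Gamma_succ' (x := 1+a-c) (y := 1+(a+1)-c) h1 (by ring),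
    Gamma_succ' (x := 1+a-e) (y := 1+(a+1)-e) h2 (by ring),
    Gamma_succ' (x := 1+a) (y := 1+(a+1)) k0 (by ring),
    Gamma_succ' (x := 1+a-c-e) (y := 1+(a+1)-c-e) g2 (by ring),
    Gamma_succ' (x := a) (y := 1+a) g1 (by ring),
    show (2+a)/2-c-e = 1+a/2-c-e by ring, show (2+a)/2-c = 1+a/2-c by ring,
    show (2+a)/2-e = 1+a/2-e by ring,
    show 1+a-2*c-2*e = 2*((1+a)/2-c-e) by ring, show 1+a-2*c = 2*((1+a)/2-c) by ring,
    show 1+a-2*e = 2*((1+a)/2-e) by ring]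
  have n1 := nn_ne0 k0
  have n2 := nn_ne0 h1
  have n3 := nn_ne0 h2
  have n4 := nn_ne0 g2
  have n5 := nn_ne0 g4
  have n6 := nn_ne0 g5
  have n7 := nn_ne0 g6
  have m1 := Real.Gamma_ne_zero g1
  have m2 := Real.Gamma_ne_zero g2
  have m3 := Real.Gamma_ne_zero g5
  have m4 := Real.Gamma_ne_zero g6
  have m5 := Real.Gamma_ne_zero G0.g9
  have m6 := Real.Gamma_ne_zero G0.g10
  clear hS1 r1 d0 s0 s1 hL G0 G1
  generalize Real.Gamma ((1+a)/2-c-e) = Q1 at *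
  generalize Real.Gamma ((1+a)/2-c) = Q2 at *
  generalize Real.Gamma ((1+a)/2-e) = Q3 at *
  generalize Real.Gamma ((1+a)/2) = Q4 at *
  generalize Real.Gamma (1+a/2-c-e) = Q5 at *
  generalize Real.Gamma (1+a/2-c) = Q6 at *
  generalize Real.Gamma (1+a/2-e) = Q7 at *
  generalize Real.Gamma (a/2) = Q8 at *
  generalize Real.Gamma (1+a-c-e) = Q9 at *
  generalize Real.Gamma (1+a-c) = Q10 at *
  generalize Real.Gamma (1+a-e) = Q11 at *
  generalize Real.Gamma a = Q12 at *
  generalize (1+a)/2-c-e = X1 at *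
  generalize (1+a)/2-c = X2 at *
  generalize (1+a)/2-e = X3 at *
  generalize 1+a-c-e = X4 at *
  generalize 1+a-c = X5 at *
  generalize 1+a-e = X6 at *
  field_simp
  ring
end
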